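/- No Uniformization Theorem: there is an infinite time decidable set A ⊆ 2^ℕ × 2^ℕ such that every slice A_y = {z ∈ 2^ℕ : (y,z) ∈ A} is nonempty, yet there is no program p such that φ_p is total on 2^ℕ and (y, φ_p(y)) ∈ A for every y ∈ 2^ℕ. -/

import Mathlib

open scoped Classical

namespace ITTM

/-- A real is an element of Cantor space. -/
abbrev R := ℕ → Bool

/-- The constant-zero real. -/
def zeroR : R := fun _ => false

/-- The real ⟨1,0,0,...⟩ coding the answer "Yes". -/
def oneR : R := fun n => decide (n = 0)

/-- The real coding a natural number `p`: `p` ones followed by zeros. -/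
def natR (p : ℕ) : R := fun n => decide (n < p)

/-- The real coding the pair of reals `(y, z)`. -/
def pairR (y z : R) : R := fun n => if n % 2 = 0 then y (n / 2) else z (n / 2)

/-- A snapshot of an infinite time Turing machine computation with state set
`Fin (Q+1)`: the current state, the head position, and the contents of the
three tapes (tape 0 is the input tape, tape 1 the scratch tape, tape 2 the
output tape); cells hold values in `Bool` (`true` = 1, `false` = 0). -/
structure Snapshot (Q : ℕ) where
  state : Fin (Q + 1)
  head : ℕ
  tape : Fin 3 → ℕ → Bool

/-- An infinite time Turing machine program: a finite set of states
`Fin (Q+1)` with distinguished start, limit and halt states, and a finite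
transition table which, given the current state and the three cell values
read by the head, specifies the next state, the three values to write, and
the direction to move (`true` = right, `false` = left). -/
structure Machine where
  Q : ℕ
  start : Fin (Q + 1)
  limit : Fin (Q + 1)
  halt : Fin (Q + 1)
  trans : Fin (Q + 1) × (Fin 3 → Bool) → Fin (Q + 1) × (Fin 3 → Bool) × Bool

instance : Inhabited Machine := ⟨⟨0, 0, 0, 0, fun _ => (0, fun _ => false, true)⟩⟩

namespace Machine

/-- The initial snapshot on input `x`: head on cell 0 in the start state, `x`
on the input tape, the other tapes filled with zeros. -/
def init (M : Machine) (x : R) : Snapshot M.Q where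
  state := M.start
  head := 0
  tape := fun i n => if i = 0 then x n else false

/-- One step of computation applied to a snapshot. -/
def stepSnap (M : Machine) (s : Snapshot M.Q) : Snapshot M.Q :=
  let t := M.trans (s.state, fun i => s.tape i s.head)
  { state := t.1
    head := if t.2.2 then s.head + 1 else s.head - 1
    tape := fun i n => if n = s.head then t.2.1 i else s.tape i n }

/-- The snapshot of the computation of machine `M` on input `x` at ordinal
stage `α`, defined by transfinite recursion: at stage 0 the initial snapshot,
at successor stages the transition table is applied, and at limit stages the
head is on cell 0 in the limit state and each cell holds the `limsup` of its
earlier values (1 iff its value was 1 cofinally often below the limit). -/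
noncomputable def snap (M : Machine) (x : R) : Ordinal.{0} → Snapshot M.Q :=
  WellFounded.fix Ordinal.lt_wf fun α ih =>
    if _h0 : α = 0 then M.init x
    else if hs : ∃ β, β < α ∧ α = β + 1 then
      M.stepSnap (ih hs.choose hs.choose_spec.1)
    else
      { state := M.limit
        head := 0
        tape := fun i n =>
          decide (∀ β < α, ∃ γ, β ≤ γ ∧ ∃ hγ : γ < α, (ih γ hγ).tape i n = true) }

/-- The machine is in the halt state at stage `α`. -/
def haltedAt (M : Machine) (x : R) (α : Ordinal) : Prop :=
  (M.snap x α).state = M.halt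

/-- The computation of `M` on input `x` halts exactly at stage `α`: stage `α`
is the first stage at which the machine is in the halt state. -/
def haltsAt (M : Machine) (x : R) (α : Ordinal) : Prop :=
  M.haltedAt x α ∧ ∀ β < α, ¬ M.haltedAt x β

/-- The computation of `M` on input `x` halts. -/
def halts (M : Machine) (x : R) : Prop := ∃ α, M.haltedAt x α

/-- The computation of `M` on input `x` halts with output `y`: at the first
stage at which the machine is in the halt state, the output tape reads `y`. -/
def outputs (M : Machine) (x y : R) : Prop :=
  ∃ α, M.haltsAt x α ∧ (M.snap x α).tape 2 = y

end Machine

/-- Machines are coded by natural numbers. -/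
noncomputable instance : Encodable Machine :=
  Encodable.ofEquiv
    (Σ Q : ℕ, (Fin (Q + 1) × Fin (Q + 1) × Fin (Q + 1)) ×
      ((Fin (Q + 1) × (Fin 3 → Bool)) → Fin (Q + 1) × (Fin 3 → Bool) × Bool))
    { toFun := fun M => ⟨M.Q, (M.start, M.limit, M.halt), M.trans⟩
      invFun := fun s => ⟨s.1, s.2.1.1, s.2.1.2.1, s.2.1.2.2, s.2.2⟩
      left_inv := fun _ => rfl
      right_inv := fun _ => rfl }

/-- The machine coded by the natural number `p`; every natural number codes a
machine, and every machine is coded by some natural number. -/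
noncomputable def prog (p : ℕ) : Machine :=
  ((Encodable.decode p : Option Machine)).getD default

/-- `φ_p(x)` halts with output `y`. -/
noncomputable def phiOutputs (p : ℕ) (x y : R) : Prop := (prog p).outputs x y

/-- A set of reals is infinite time decidable when some machine, on any input
`x`, halts with output ⟨1,0,0,...⟩ if `x ∈ A` and output ⟨0,0,0,...⟩ if
`x ∉ A`. -/
def ITTMDecidable (A : Set R) : Prop :=
  ∃ M : Machine, ∀ x : R, (x ∈ A → M.outputs x oneR) ∧ (x ∉ A → M.outputs x zeroR)

/-- A set of reals is infinite time semi-decidable when it is the halting set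
of some machine. -/
def ITTMSemiDecidable (A : Set R) : Prop :=
  ∃ M : Machine, A = {x : R | M.halts x}

/-- The binary relation on ℕ coded by the real `x`:
`n ◁ k ⟺ x(⟨n,k⟩) = 1` where `⟨·,·⟩` is the pairing function. -/
def rel (x : R) (n k : ℕ) : Prop := x (Nat.pair n k) = true

/-- The field of the relation coded by `x`. -/
def field (x : R) : Set ℕ := {n | ∃ k, rel x n k ∨ rel x k n}

/-- The relation coded by `x`, restricted to its field. -/
def relOn (x : R) : field x → field x → Prop := fun a b => rel x a.1 b.1

/-- The real `x` codes a well-order of (a subset of) ℕ, namely its field. -/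
def codesWellOrder (x : R) : Prop := IsWellOrder (field x) (relOn x)

/-- The set of reals coding well-orders. -/
def WO : Set R := {x | codesWellOrder x}

/-- The real `x` codes a well-order of order type `α`. -/
def codesOrdinal (x : R) (α : Ordinal) : Prop :=
  ∃ h : codesWellOrder x, @Ordinal.type _ (relOn x) h = α

/-- An ordinal is clockable when some machine on input 0 halts exactly at
stage `α`. -/
def Clockable (α : Ordinal) : Prop := ∃ M : Machine, M.haltsAt zeroR α

/-- A real is writable when it is the output of some machine on input 0. -/
def WritableReal (x : R) : Prop := ∃ M : Machine, M.outputs zeroR x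

/-- An ordinal is writable when some writable real codes a well-order of that
order type. -/
def WritableOrdinal (α : Ordinal) : Prop :=
  ∃ x : R, WritableReal x ∧ codesOrdinal x α

/-- A real is eventually writable when some machine on input 0 never halts,
but from some stage onward the content of its output tape is exactly `x`. -/
def EventuallyWritableReal (x : R) : Prop :=
  ∃ M : Machine, ¬ M.halts zeroR ∧ ∃ α : Ordinal, ∀ β ≥ α, (M.snap zeroR β).tape 2 = x

/-- An ordinal is eventually writable when some eventually writable real codes
a well-order of that order type. -/
def EventuallyWritableOrdinal (α : Ordinal) : Prop :=
  ∃ x : R, EventuallyWritableReal x ∧ codesOrdinal x α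

end ITTM

/-- The first component of the pair coded by the real `w`. -/
def leftR (w : ITTM.R) : ITTM.R := fun n => w (2 * n)

/-- The second component of the pair coded by the real `w`. -/
def rightR (w : ITTM.R) : ITTM.R := fun n => w (2 * n + 1)

/-- The set of reals coding (via the pair coding `w(2n) = y(n)`,
`w(2n+1) = z(n)`) the pairs in a set `A ⊆ 2^ℕ × 2^ℕ`; a set of pairs of reals
is called decidable (or semi-decidable) when this set of codes is. -/
def pairCodes (A : Set (ITTM.R × ITTM.R)) : Set ITTM.R :=
  {w : ITTM.R | (leftR w, rightR w) ∈ A}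

/-!
Every real `y` defines an operator on reals, read off as a list of instructions, and hence a
transfinite iteration `iter y` with upper limits at limit stages. Its value at `ω₁` recurs
cofinally below `ω₁`. The set consists of the pairs `(y, z)` where `z` names a recurring value of
`iter y`, complemented at bit 0, together with a clock: an iteration that bounds the search for the
recurrence. The search is decidable because a clock stops when it no longer produces bits dropping
for the first time, and slices are nonempty because some clock outruns any given countable ordinal.
Given a machine, a recursion theorem for open operators yields `y` such that `iter y` simulates the
machine on input `y` itself. If the machine halts on `y`, the value of `iter y` at place 0 is
eventually bit 0 of the output. So this is bit 0 of every value that recurs cofinally, and the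
output does not name one with bit 0 complemented.
-/

open Ordinal Order

namespace ITTM

/-! ### Transfinite iteration and multitrack programs -/

/-- The `limsup` of a transfinite sequence of bits below `a`. -/
noncomputable def lsup (f : Ordinal.{0} → Bool) (a : Ordinal.{0}) : Bool :=
  decide (∀ b < a, ∃ c, b ≤ c ∧ c < a ∧ f c = true)

section Lsup
variable {f g : Ordinal.{0} → Bool} {a b k t : Ordinal.{0}}

theorem lsup_eq_true : lsup f a = true ↔ ∀ b < a, ∃ c, b ≤ c ∧ c < a ∧ f c = true := by
  simp [lsup]

theorem lsup_eq_false : lsup f a = false ↔ ∃ b < a, ∀ c, b ≤ c → c < a → f c = false := by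
  simp [lsup]

theorem lsup_congr (h : ∀ b < a, f b = g b) : lsup f a = lsup g a := by
  rw [Bool.eq_iff_iff, lsup_eq_true, lsup_eq_true]
  refine forall₂_congr fun b _ => exists_congr fun c => and_congr_right fun _ => ?_
  exact and_congr_right fun hc => by rw [h c hc]

theorem lsup_of_eventually {v : Bool} (hb : b < a) (h : ∀ c, b ≤ c → c < a → f c = v) :
    lsup f a = v := by
  cases v with
  | false => exact lsup_eq_false.2 ⟨b, hb, h⟩
  | true => exact lsup_eq_true.2 fun c hc =>
      ⟨max b c, le_max_right _ _, max_lt hb hc, h _ (le_max_left _ _) (max_lt hb hc)⟩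

theorem lsup_add (ha : 0 < a) : lsup f (t + a) = lsup (fun c => f (t + c)) a := by
  rw [Bool.eq_iff_iff, lsup_eq_true, lsup_eq_true]
  constructor
  · intro h b hb
    obtain ⟨c, hbc, hca, hc⟩ := h (t + b) (by gcongr)
    obtain ⟨c, rfl⟩ := exists_add_of_le (le_self_add.trans hbc)
    exact ⟨c, (add_le_add_iff_left t).1 hbc, (add_lt_add_iff_left t).1 hca, hc⟩
  · intro h b hb
    rcases le_total b t with hbt | htb
    · obtain ⟨c, -, hca, hc⟩ := h 0 ha
      exact ⟨t + c, hbt.trans le_self_add, by gcongr, hc⟩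
    · obtain ⟨b, rfl⟩ := exists_add_of_le htb
      obtain ⟨c, hbc, hca, hc⟩ := h b ((add_lt_add_iff_left t).1 hb)
      exact ⟨t + c, by gcongr, by gcongr, hc⟩

theorem lsup_mul (hk : 0 < k) (ha : IsSuccLimit a)
    (h : ∀ b < a, ∀ c < k, f (k * b + c) = true → f (k * b) = true ∨ f (k * (b + 1)) = true) :
    lsup f (k * a) = lsup (fun b => f (k * b)) a := by
  rw [Bool.eq_iff_iff, lsup_eq_true, lsup_eq_true]
  constructor
  · intro H b hb
    obtain ⟨c, hbc, hca, hc⟩ := H (k * b) ((mul_lt_mul_iff_right₀ hk).2 hb)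
    have hlt : c / k < a := (Ordinal.lt_mul_iff_div_lt hk.ne').1 hca
    have hle : b ≤ c / k := (Ordinal.mul_le_iff_le_div hk.ne').1 hbc
    rw [← Ordinal.div_add_mod c k] at hc
    rcases h _ hlt _ (Ordinal.mod_lt c hk.ne') hc with hl | hr
    · exact ⟨_, hle, hlt, hl⟩
    · exact ⟨_, hle.trans le_self_add, by simpa using ha.succ_lt hlt, hr⟩
  · intro H b hb
    obtain ⟨c, hbc, hca, hc⟩ := H (b / k + 1) (by
      simpa using ha.succ_lt ((Ordinal.lt_mul_iff_div_lt hk.ne').1 hb))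
    have hbk : b ≤ k * (b / k + 1) := by simpa using (Ordinal.lt_mul_succ_div b hk.ne').le
    exact ⟨k * c, hbk.trans (by gcongr), (mul_lt_mul_iff_right₀ hk).2 hca, hc⟩

end Lsup

section Iteration
variable {X : Type*}

/-- Transfinite iteration of `s` from `x₀`, where `L f a` is the value at a limit ordinal `a` of
the iteration that equals `f` below `a`. -/
noncomputable def titer (x₀ : X) (s : X → X) (L : (Ordinal.{0} → X) → Ordinal.{0} → X)
    (a : Ordinal.{0}) : X :=
  Ordinal.limitRecOn (motive := fun _ => X) a x₀ (fun _ x => s x)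
    (fun a _ ih => L (fun b => if h : b < a then ih b h else x₀) a)

variable {x₀ : X} {s : X → X} {L : (Ordinal.{0} → X) → Ordinal.{0} → X}

theorem titer_zero : titer x₀ s L 0 = x₀ := by simp [titer]

theorem titer_add_one (a : Ordinal.{0}) : titer x₀ s L (a + 1) = s (titer x₀ s L a) := by
  simp [titer]

theorem titer_add_nat (a : Ordinal.{0}) (n : ℕ) :
    titer x₀ s L (a + n) = s^[n] (titer x₀ s L a) := by
  induction n with
  | zero => simp
  | succ n ih => rw [Nat.cast_succ, ← add_assoc, titer_add_one, ih, Function.iterate_succ_apply']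

theorem titer_limit (hL : ∀ f g a, (∀ b < a, f b = g b) → L f a = L g a) {a : Ordinal.{0}}
    (ha : IsSuccLimit a) : titer x₀ s L a = L (titer x₀ s L) a := by
  rw [titer, Ordinal.limitRecOn_limit _ _ _ _ ha]
  exact hL _ _ _ fun b hb => by simp [hb, titer]

end Iteration

@[elab_as_elim]
theorem ordinal_induction {P : Ordinal.{0} → Prop} (a : Ordinal.{0}) (zero : P 0)
    (add_one : ∀ a, P a → P (a + 1)) (limit : ∀ a, IsSuccLimit a → (∀ b < a, P b) → P a) : P a :=
  Ordinal.limitRecOn (motive := P) a zero add_one limit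

theorem isSuccLimit_add_omega (a : Ordinal.{0}) : IsSuccLimit (a + ω) :=
  isSuccLimit_add a isSuccLimit_omega0

namespace Machine
variable (M : Machine) (x : R)

theorem snap_eq (a : Ordinal.{0}) : M.snap x a =
    if _h0 : a = 0 then M.init x
    else if hs : ∃ β, β < a ∧ a = β + 1 then M.stepSnap (M.snap x hs.choose)
    else ⟨M.limit, 0, fun i n => lsup (fun c => (M.snap x c).tape i n) a⟩ := by
  rw [snap, WellFounded.fix_eq]
  simp only [lsup, exists_prop]

theorem snap_zero : M.snap x 0 = M.init x := by rw [snap_eq]; simp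

theorem snap_add_one (a : Ordinal.{0}) : M.snap x (a + 1) = M.stepSnap (M.snap x a) := by
  have hs : ∃ β, β < a + 1 ∧ a + 1 = β + 1 := ⟨a, by simp, rfl⟩
  rw [snap_eq, dif_neg (by simp), dif_pos hs]
  have := hs.choose_spec.2
  rw [← succ_injective (by simpa using this : succ a = succ hs.choose)]

theorem snap_limit {a : Ordinal.{0}} (ha : IsSuccLimit a) :
    M.snap x a = ⟨M.limit, 0, fun i n => lsup (fun c => (M.snap x c).tape i n) a⟩ := by
  rw [snap_eq, dif_neg (by rintro rfl; simp at ha), dif_neg]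
  rintro ⟨b, -, rfl⟩
  simp at ha

end Machine

/-- A configuration of a multitrack program: a cell of the tape carries one bit for each track
`t : τ`. -/
@[ext] structure Conf (σ τ : Type*) where
  state : σ
  head : ℕ
  cell : ℕ → τ → Bool

/-- An infinite time program with states in `σ` on a single tape with tracks indexed by `τ`. The
transition function returns the new state, the bits to write, and the direction of the head move
(`true` = right). -/
structure Prog (σ τ : Type*) where
  start : σ
  lim : σ
  halt : σ
  tr : σ → (τ → Bool) → σ × (τ → Bool) × Bool

namespace Prog
variable {σ τ : Type*}

/-- One computation step. -/
def step (p : Prog σ τ) (c : Conf σ τ) : Conf σ τ where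
  state := (p.tr c.state (c.cell c.head)).1
  head := if (p.tr c.state (c.cell c.head)).2.2 then c.head + 1 else c.head - 1
  cell := Function.update c.cell c.head (p.tr c.state (c.cell c.head)).2.1

/-- The configuration at a limit stage. -/
noncomputable def limConf (p : Prog σ τ) (f : Ordinal.{0} → Conf σ τ) (a : Ordinal.{0}) :
    Conf σ τ :=
  ⟨p.lim, 0, fun n t => lsup (fun b => (f b).cell n t) a⟩

/-- The transfinite computation started from the tape contents `c₀`. -/
noncomputable def run (p : Prog σ τ) (c₀ : ℕ → τ → Bool) : Ordinal.{0} → Conf σ τ :=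
  titer ⟨p.start, 0, c₀⟩ p.step p.limConf

/-- The computation started from the tape contents `c₀` halts exactly at stage `a`. -/
def HaltsAt (p : Prog σ τ) (c₀ : ℕ → τ → Bool) (a : Ordinal.{0}) : Prop :=
  (p.run c₀ a).state = p.halt ∧ ∀ b < a, (p.run c₀ b).state ≠ p.halt

variable {p : Prog σ τ} {c₀ : ℕ → τ → Bool}

theorem run_zero : p.run c₀ 0 = ⟨p.start, 0, c₀⟩ := titer_zero

theorem run_add_one (a : Ordinal.{0}) : p.run c₀ (a + 1) = p.step (p.run c₀ a) :=
  titer_add_one a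

theorem run_add_nat (a : Ordinal.{0}) (n : ℕ) : p.run c₀ (a + n) = p.step^[n] (p.run c₀ a) :=
  titer_add_nat a n

theorem run_limit {a : Ordinal.{0}} (ha : IsSuccLimit a) : p.run c₀ a = p.limConf (p.run c₀) a := by
  refine titer_limit (fun f g a h => ?_) ha
  simp only [limConf, Conf.mk.injEq, true_and]
  funext n t
  exact lsup_congr fun b hb => by rw [h b hb]

theorem step_mk {q q' : σ} {h : ℕ} {C : ℕ → τ → Bool} {c : τ → Bool} {d : Bool}
    (htr : p.tr q (C h) = (q', c, d)) :
    p.step ⟨q, h, C⟩ = ⟨q', if d then h + 1 else h - 1, Function.update C h c⟩ := by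
  simp [step, htr]

/-- The bit tape holding `w` on the first track, which is the input tape of a machine. -/
def inputTape (w : R) (n : ℕ) (i : Fin 3) : Bool := if i = 0 then w n else false

section ToMachine
variable {S : Type*} (p : Prog S (Fin 3))

/-- Transport of a bit tape program along an enumeration of its states. -/
def toMachine {N : ℕ} (e : S ≃ Fin (N + 1)) : Machine :=
  ⟨N, e p.start, e p.lim, e p.halt, fun x => Prod.map e id (p.tr (e.symm x.1) x.2)⟩

theorem snap_toMachine {N : ℕ} (e : S ≃ Fin (N + 1)) (w : R) (a : Ordinal.{0}) :
    (p.toMachine e).snap w a = ⟨e (p.run (inputTape w) a).state, (p.run (inputTape w) a).head,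
      fun i n => (p.run (inputTape w) a).cell n i⟩ := by
  induction a using ordinal_induction with
  | zero => rw [Machine.snap_zero, run_zero]; rfl
  | add_one a ih =>
    rw [Machine.snap_add_one, run_add_one, ih]
    simp only [Machine.stepSnap, step, toMachine, Equiv.symm_apply_apply, Prod.map_fst,
      Prod.map_snd, id_eq, Snapshot.mk.injEq, true_and]
    funext i n
    by_cases h : n = (p.run (inputTape w) a).head <;> simp [Function.update, h]
  | limit a ha ih =>
    rw [Machine.snap_limit _ w ha, run_limit ha]
    simp only [limConf, toMachine, Snapshot.mk.injEq, true_and]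
    funext i n
    exact lsup_congr fun b hb => congrArg (fun s => s.tape i n) (ih b hb)

theorem exists_machine [Finite S] : ∃ M : Machine, ∀ w a, p.HaltsAt (inputTape w) a →
    M.outputs w (fun n => (p.run (inputTape w) a).cell n 2) := by
  have : Nonempty S := ⟨p.start⟩
  obtain ⟨N, hN⟩ := Nat.exists_eq_succ_of_ne_zero (Nat.card_pos (α := S)).ne'
  let e : S ≃ Fin (N + 1) := Finite.equivFinOfCardEq hN
  refine ⟨p.toMachine e, fun w a ha => ⟨a, ⟨?_, fun b hb => ?_⟩, ?_⟩⟩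
  · rw [Machine.haltedAt, snap_toMachine]
    exact congrArg e ha.1
  · rw [Machine.haltedAt, snap_toMachine]
    exact fun h => ha.2 b hb (e.injective h)
  · rw [snap_toMachine]

end ToMachine

/-- `p` leads from `c` to `d` in `n` steps; the configurations strictly before `d` satisfy `I`. -/
def Steps (p : Prog σ τ) (I : Conf σ τ → Prop) (n : ℕ) (c d : Conf σ τ) : Prop :=
  p.step^[n] c = d ∧ ∀ m < n, I (p.step^[m] c)

/-- `p` leads from `c` to `d` in finitely many steps; the configurations strictly before `d`
satisfy `I`. -/
def Reach (p : Prog σ τ) (I : Conf σ τ → Prop) (c d : Conf σ τ) : Prop :=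
  ∃ n, p.Steps I n c d

variable {I J : Conf σ τ → Prop} {c d e : Conf σ τ} {m n : ℕ}

theorem Steps.trans (h : p.Steps I m c d) (h' : p.Steps I n d e) : p.Steps I (m + n) c e := by
  obtain ⟨rfl, hI⟩ := h
  obtain ⟨rfl, hI'⟩ := h'
  refine ⟨by rw [add_comm, Function.iterate_add_apply], fun i hi => ?_⟩
  rcases lt_or_ge i m with him | hmi
  · exact hI i him
  · obtain ⟨j, rfl⟩ := exists_add_of_le hmi
    rw [add_comm, Function.iterate_add_apply]
    exact hI' j (by omega)

theorem Steps.of_forall {f : ℕ → Conf σ τ} (hf : ∀ i < n, p.step (f i) = f (i + 1))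
    (hI : ∀ i < n, I (f i)) : p.Steps I n (f 0) (f n) := by
  have key : ∀ i ≤ n, p.step^[i] (f 0) = f i := fun i hi => by
    induction i with
    | zero => rfl
    | succ i ih => rw [Function.iterate_succ_apply', ih (by omega), hf i (by omega)]
  exact ⟨key n le_rfl, fun i hi => by rw [key i hi.le]; exact hI i hi⟩

end Prog

/-! ### Simulation of multitrack programs on bit tapes -/

section Blocks
variable {σ τ : Type*} {L : ℕ} (pos : τ → Fin 3 × Fin L)

/-- The block of `L` cells of a bit tape representing one cell of a multitrack tape: track `t` is
stored at position `pos t`. -/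
noncomputable def encCell (c : τ → Bool) (j : Fin L) (i : Fin 3) : Bool :=
  decide (∃ t, pos t = (i, j) ∧ c t = true)

/-- The multitrack cell represented by a block. -/
def decCell (b : Fin L → Fin 3 → Bool) (t : τ) : Bool := b (pos t).2 (pos t).1

variable {pos} in
theorem decCell_encCell (hpos : Function.Injective pos) (c : τ → Bool) :
    decCell pos (encCell pos c) = c := by
  funext t
  rw [Bool.eq_iff_iff, decCell, encCell, decide_eq_true_eq]
  exact ⟨fun ⟨s, hs, h⟩ => hpos hs ▸ h, fun h => ⟨t, rfl, h⟩⟩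

/-- The contents of the buffer after `j` cells of the block at the head have been read. -/
noncomputable def partialBuffer (c : Conf σ τ) (j : ℕ) (k : Fin L) (i : Fin 3) : Bool :=
  if k.val < j then encCell pos (c.cell c.head) k i else false

theorem partialBuffer_length (c : Conf σ τ) :
    partialBuffer pos c L = encCell pos (c.cell c.head) := by
  funext k i
  simp [partialBuffer]

theorem decCell_partialBuffer (c : Conf σ τ) (hpos : Function.Injective pos) :
    decCell pos (partialBuffer pos c L) = c.cell c.head := by
  rw [partialBuffer_length, decCell_encCell hpos]

variable [NeZero L]

/-- The bit tape representing a multitrack tape, block by block. -/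
noncomputable def encTape (C : ℕ → τ → Bool) (n : ℕ) : Fin 3 → Bool :=
  encCell pos (C (n / L)) (Fin.ofNat L n)

theorem encTape_mul_add (C : ℕ → τ → Bool) (h : ℕ) {j : ℕ} (hj : j < L) :
    encTape pos C (L * h + j) = encCell pos (C h) ⟨j, hj⟩ := by
  simp [encTape, Nat.mul_add_div (NeZero.pos L), Nat.div_eq_of_lt hj, Fin.ofNat,
    Nat.mod_eq_of_lt hj]

theorem encTape_limit (f : Ordinal.{0} → ℕ → τ → Bool) {a : Ordinal.{0}} (ha : 0 < a)
    (hpos : Function.Injective pos) (n : ℕ) (i : Fin 3) :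
    encTape pos (fun m t => lsup (fun b => f b m t) a) n i =
      lsup (fun b => encTape pos (f b) n i) a := by
  by_cases h : ∃ t, pos t = (i, Fin.ofNat L n)
  · obtain ⟨t, ht⟩ := h
    have key (C : ℕ → τ → Bool) : encTape pos C n i = C (n / L) t := by
      rw [← congrFun (decCell_encCell hpos (C (n / L))) t, decCell, ht, encTape]
    simp only [key]
  · have key (C : ℕ → τ → Bool) : encTape pos C n i = false := by
      simp only [encTape, encCell, decide_eq_false_iff_not]
      exact fun ⟨t, ht, _⟩ => h ⟨t, ht⟩
    simp only [key]
    exact (lsup_of_eventually ha fun _ _ _ => rfl).symm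

/-- The states of the simulation of a multitrack program on a bit tape: the simulation of a step
has five phases of `L` steps each; the simulated state is accompanied by the position in this loop
and by a buffer for the contents of a block. -/
abbrev BlockState (σ : Type*) (L : ℕ) := (Fin 5 × Fin L) × σ × (Fin L → Fin 3 → Bool)

/-- The position in the loop after `j ≤ L` steps of phase `φ`. -/
def loopPos (φ : Fin 5) (j : ℕ) : Fin 5 × Fin L := if h : j < L then (φ, ⟨j, h⟩) else (φ + 1, 0)

/-- The state at the beginning of the simulation of a step. -/
def BlockState.init (q : σ) : BlockState σ L := ((0, 0), q, fun _ _ => false)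

/-- The simulation of a multitrack program on a bit tape: read the block, walk back, write the new
block, walk back, and walk to the neighbouring block. -/
noncomputable def blockProg (p : Prog σ τ) : Prog (BlockState σ L) (Fin 3) where
  start := .init p.start
  lim := .init p.lim
  halt := .init p.halt
  tr s r :=
    let ((φ, j), q, b) := s
    let o := p.tr q (decCell pos b)
    let next : BlockState σ L := (loopPos φ (j + 1), q, b)
    match φ with
    | 0 => ((next.1, q, Function.update b j r), r, true)
    | 1 => (next, r, false)
    | 2 => (next, encCell pos o.2.1 j, true)
    | 3 => (next, r, false)
    | 4 => (if j + 1 < L then next else .init o.1, r, o.2.2)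

/-- The bit tape configuration representing a multitrack configuration. -/
noncomputable def encConf (c : Conf σ τ) : Conf (BlockState σ L) (Fin 3) :=
  ⟨.init c.state, L * c.head, encTape pos c.cell⟩

/-- What holds of the bit tape at all times during the simulation of a step from `c`. -/
def DuringStep (p : Prog σ τ) (c : Conf σ τ) (d : Conf (BlockState σ L) (Fin 3)) : Prop :=
  d.state.2.1 = c.state ∧ ∀ n i, d.cell n i = true →
    encTape pos c.cell n i = true ∨ encTape pos (p.step c).cell n i = true

/-- The bit tape after `j` cells of the block at the head have been rewritten. -/
noncomputable def partialTape (p : Prog σ τ) (c : Conf σ τ) (j : ℕ) (n : ℕ) : Fin 3 → Bool :=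
  if n / L = c.head ∧ n % L < j then encTape pos (p.step c).cell n else encTape pos c.cell n

variable (p : Prog σ τ) (c : Conf σ τ)

theorem partialBuffer_add_one {j : ℕ} (hj : j < L) :
    Function.update (partialBuffer pos c j) ⟨j, hj⟩ (encTape pos c.cell (L * c.head + j)) =
      partialBuffer pos c (j + 1) := by
  funext k i
  rcases eq_or_ne k ⟨j, hj⟩ with rfl | hk
  · simp [partialBuffer, encTape_mul_add pos _ _ hj]
  · have : k.val ≠ j := fun h => hk (Fin.ext h)
    simp only [partialBuffer, Function.update_of_ne hk, Nat.lt_succ_iff_lt_or_eq, this, or_false]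

theorem partialTape_zero : partialTape pos p c 0 = encTape pos c.cell := by
  funext n
  simp [partialTape]

theorem partialTape_length : partialTape pos p c L = encTape pos (p.step c).cell := by
  funext n
  by_cases h : n / L = c.head
  · simp [partialTape, h, Nat.mod_lt n (NeZero.pos L)]
  · simp [partialTape, h, encTape, Prog.step]

theorem partialTape_add_one {j : ℕ} (hj : j < L) :
    Function.update (partialTape pos p c j) (L * c.head + j)
      (encCell pos (p.tr c.state (c.cell c.head)).2.1 ⟨j, hj⟩) = partialTape pos p c (j + 1) := by
  funext n
  rcases eq_or_ne n (L * c.head + j) with rfl | hn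
  · have hdiv : (L * c.head + j) / L = c.head := by
      simp [Nat.mul_add_div (NeZero.pos L), Nat.div_eq_of_lt hj]
    simp [partialTape, hdiv, Nat.mod_eq_of_lt hj, encTape_mul_add pos _ _ hj, Prog.step]
  · have : n / L = c.head → n % L ≠ j := by
      rintro h rfl
      exact hn (by rw [← h, Nat.div_add_mod])
    have : n / L = c.head ∧ n % L < j + 1 ↔ n / L = c.head ∧ n % L < j := by
      rw [Nat.lt_succ_iff_lt_or_eq]; tauto
    simp only [partialTape, this, Function.update_of_ne hn]

theorem loopPos_of_lt {φ : Fin 5} {j : ℕ} (hj : j < L) : loopPos φ j = (φ, ⟨j, hj⟩) := dif_pos hj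

theorem loopPos_length {φ : Fin 5} : loopPos φ L = loopPos (L := L) (φ + 1) 0 := by
  simp [loopPos, NeZero.pos L]

theorem steps_read : (blockProg pos p).Steps (DuringStep pos p c) L
    ⟨(loopPos 0 0, c.state, partialBuffer pos c 0), L * c.head, encTape pos c.cell⟩
    ⟨(loopPos 0 L, c.state, partialBuffer pos c L), L * c.head + L, encTape pos c.cell⟩ := by
  refine Prog.Steps.of_forall (f := fun j => ⟨(loopPos 0 j, c.state, partialBuffer pos c j),
    L * c.head + j, encTape pos c.cell⟩) (fun j hj => ?_) fun _ _ => ⟨rfl, fun n i h => .inl h⟩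
  simp [Prog.step, blockProg, loopPos_of_lt hj, partialBuffer_add_one, add_assoc]

theorem steps_back : (blockProg pos p).Steps (DuringStep pos p c) L
    ⟨(loopPos 1 0, c.state, partialBuffer pos c L), L * c.head + L, encTape pos c.cell⟩
    ⟨(loopPos 1 L, c.state, partialBuffer pos c L), L * c.head, encTape pos c.cell⟩ := by
  have := Prog.Steps.of_forall (p := blockProg pos p) (I := DuringStep pos p c) (n := L)
    (f := fun j => ⟨(loopPos 1 j, c.state, partialBuffer pos c L),
      L * c.head + L - j, encTape pos c.cell⟩) (fun j hj => ?_)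
    fun _ _ => ⟨rfl, fun n i h => .inl h⟩
  · simpa using this
  · simp [Prog.step, blockProg, loopPos_of_lt hj, Nat.sub_sub]

theorem steps_write (hpos : Function.Injective pos) :
    (blockProg pos p).Steps (DuringStep pos p c) L
    ⟨(loopPos 2 0, c.state, partialBuffer pos c L), L * c.head, partialTape pos p c 0⟩
    ⟨(loopPos 2 L, c.state, partialBuffer pos c L), L * c.head + L, partialTape pos p c L⟩ := by
  refine Prog.Steps.of_forall (f := fun j => ⟨(loopPos 2 j, c.state, partialBuffer pos c L),
    L * c.head + j, partialTape pos p c j⟩) (fun j hj => ?_) fun _ _ => ⟨rfl, fun n i h => ?_⟩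
  · simp [Prog.step, blockProg, loopPos_of_lt hj, decCell_partialBuffer pos c hpos,
      ← partialTape_add_one pos p c hj, add_assoc]
  · simp only [partialTape] at h
    split_ifs at h
    exacts [.inr h, .inl h]

theorem steps_rewind : (blockProg pos p).Steps (DuringStep pos p c) L
    ⟨(loopPos 3 0, c.state, partialBuffer pos c L), L * c.head + L, encTape pos (p.step c).cell⟩
    ⟨(loopPos 3 L, c.state, partialBuffer pos c L), L * c.head, encTape pos (p.step c).cell⟩ := by
  have := Prog.Steps.of_forall (p := blockProg pos p) (I := DuringStep pos p c) (n := L)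
    (f := fun j => ⟨(loopPos 3 j, c.state, partialBuffer pos c L),
      L * c.head + L - j, encTape pos (p.step c).cell⟩) (fun j hj => ?_)
    fun _ _ => ⟨rfl, fun n i h => .inr h⟩
  · simpa using this
  · simp [Prog.step, blockProg, loopPos_of_lt hj, Nat.sub_sub]

/-- The configuration after `j` steps of the last phase. -/
noncomputable def moveConf (j : ℕ) : Conf (BlockState σ L) (Fin 3) where
  state := if j < L then (loopPos 4 j, c.state, partialBuffer pos c L) else .init (p.step c).state
  head := if (p.tr c.state (c.cell c.head)).2.2 then L * c.head + j else L * c.head - j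
  cell := encTape pos (p.step c).cell

theorem moveConf_length : moveConf pos p c L = encConf pos (p.step c) := by
  simp only [moveConf, encConf, lt_self_iff_false, if_false, Prog.step]
  split_ifs <;> simp [mul_add, Nat.mul_sub]

theorem steps_move (hpos : Function.Injective pos) :
    (blockProg pos p).Steps (DuringStep pos p c) L (moveConf pos p c 0) (moveConf pos p c L) := by
  refine Prog.Steps.of_forall (fun j hj => ?_) fun j hj =>
    ⟨by simp [moveConf, hj], fun n i h => .inr h⟩
  simp only [moveConf, Prog.step, blockProg, hj, if_true, loopPos_of_lt hj,
    decCell_partialBuffer pos c hpos, Function.update_eq_self]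
  split_ifs <;> simp [*, Nat.sub_sub, add_assoc]

theorem steps_block (hpos : Function.Injective pos) :
    (blockProg pos p).Steps (DuringStep pos p c) (5 * L) (encConf pos c)
      (encConf pos (p.step c)) := by
  have hread := steps_read pos p c
  have hback := steps_back pos p c
  have hwrite := steps_write pos p c hpos
  have hrewind := steps_rewind pos p c
  have hmove := steps_move pos p c hpos
  rw [loopPos_length] at hread hback hwrite hrewind
  rw [partialTape_zero, partialTape_length] at hwrite
  rw [moveConf_length] at hmove
  have hstart : encConf pos c =
      ⟨(loopPos 0 0, c.state, partialBuffer pos c 0), L * c.head, encTape pos c.cell⟩ := by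
    have : partialBuffer pos c 0 = fun _ _ => false := by funext k i; simp [partialBuffer]
    simp [encConf, BlockState.init, loopPos, NeZero.pos L, this]
  have hend : moveConf pos p c 0 = ⟨(loopPos (3 + 1) 0, c.state, partialBuffer pos c L),
      L * c.head, encTape pos (p.step c).cell⟩ := by
    simp [moveConf, NeZero.pos L]
  rw [hend] at hmove
  rw [hstart, show 5 * L = L + L + L + L + L by ring]
  exact (((hread.trans hback).trans hwrite).trans hrewind).trans hmove

theorem blockProg_run (hpos : Function.Injective pos) (C : ℕ → τ → Bool) (a : Ordinal.{0}) :
    (blockProg pos p).run (encTape pos C) ((5 * L : ℕ) * a) = encConf pos (p.run C a) := by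
  have hL : (0 : Ordinal.{0}) < (5 * L : ℕ) := by
    exact_mod_cast Nat.mul_pos (by norm_num) (NeZero.pos L)
  induction a using ordinal_induction with
  | zero => simp [Prog.run_zero, encConf, blockProg]
  | add_one a ih =>
    rw [mul_add_one, Prog.run_add_nat, ih, Prog.run_add_one, (steps_block pos p _ hpos).1]
  | limit a ha ih =>
    rw [Prog.run_limit (isSuccLimit_mul_right hL ha), Prog.run_limit ha]
    simp only [Prog.limConf, encConf, Conf.mk.injEq, mul_zero]
    refine ⟨rfl, trivial, funext₂ fun n i => ?_⟩
    rw [encTape_limit pos _ ha.bot_lt hpos, lsup_mul hL ha]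
    · exact lsup_congr fun b hb => by rw [ih b hb, encConf]
    · intro b hb k hk h
      obtain ⟨k, rfl⟩ := lt_omega0.1 (hk.trans (natCast_lt_omega0 _))
      have hsteps := steps_block pos p (p.run C b) hpos
      rw [Prog.run_add_nat, ih b hb] at h
      rw [mul_add_one, Prog.run_add_nat, ih b hb, hsteps.1]
      exact (hsteps.2 k (Nat.cast_lt.1 hk)).2 n i h

variable {pos} in
theorem blockProg_haltsAt (hpos : Function.Injective pos) {C : ℕ → τ → Bool} {a : Ordinal.{0}}
    (ha : p.HaltsAt C a) : (blockProg pos p).HaltsAt (encTape pos C) ((5 * L : ℕ) * a) := by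
  have hL : ((5 * L : ℕ) : Ordinal.{0}) ≠ 0 := by
    exact_mod_cast (Nat.mul_pos (by norm_num) (NeZero.pos L)).ne'
  refine ⟨?_, fun t ht => ?_⟩
  · rw [blockProg_run pos p hpos, encConf, ha.1, blockProg]
  · rw [← Ordinal.div_add_mod t (5 * L : ℕ)]
    have hk := Ordinal.mod_lt t hL
    obtain ⟨k, hkt⟩ := lt_omega0.1 (hk.trans (natCast_lt_omega0 _))
    rw [hkt, Nat.cast_lt] at hk
    rw [hkt, Prog.run_add_nat, blockProg_run pos p hpos]
    intro h
    apply ha.2 _ ((Ordinal.lt_mul_iff_div_lt hL).1 ht)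
    exact ((steps_block pos p _ hpos).2 k hk).1.symm.trans (congrArg (fun s => s.2.1) h)

theorem exists_machine_of_prog [Finite σ] (hpos : Function.Injective pos) :
    ∃ M : Machine, ∀ w C a, encTape pos C = Prog.inputTape w → p.HaltsAt C a →
      M.outputs w (fun n => encTape pos (p.run C a).cell n 2) := by
  obtain ⟨M, hM⟩ := (blockProg pos p).exists_machine
  refine ⟨M, fun w C a hC ha => ?_⟩
  have := hM w _ (hC ▸ blockProg_haltsAt p hpos ha)
  rwa [← hC, blockProg_run pos p hpos] at this

end Blocks

/-! ### Iterations coded by reals and the set to be uniformized -/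

/-- Instructions of a one-pointer engine that evaluates conjunctions of bits of an operand `d` and
of its own input `u`: move the pointer one cell to the right, move it to cell 0, store the
conjunction at the pointer and start a new one, or add to the conjunction the condition that the
bit of `d`, respectively the `r`-th bit of `u` in the cell of the pointer, is `b`. -/
inductive Instr where
  | inc
  | reset
  | store
  | operandIs (b : Bool)
  | inputIs (r : Fin 8) (b : Bool)
  deriving Fintype, DecidableEq

namespace Instr

/-- The pointer after an instruction. -/
def move : Instr → ℕ → ℕ
  | inc, p => p + 1
  | reset, _ => 0
  | _, p => p

/-- The instruction sets the pointer. -/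
def moves (i : Instr) : Bool := i = inc ∨ i = reset

/-- The conjunction after an instruction, from the bits `d` and `u` in the cell of the pointer. -/
def flag : Instr → Bool → (Fin 8 → Bool) → Bool → Bool
  | inc, _, _, f => f
  | reset, _, _, f => f
  | store, _, _, _ => true
  | operandIs b, d, _, f => f && (d == b)
  | inputIs r b, _, u, f => f && (u r == b)

/-- The bit by which an instruction updates the output in the cell of the pointer. -/
def stored : Instr → Bool → Bool
  | store, f => f
  | _, _ => false

theorem move_le (i : Instr) (p : ℕ) : i.move p ≤ p + 1 := by cases i <;> simp [move]

theorem exists_decode : ∃ g : (Fin 7 → Bool) → Instr, Function.Surjective g := by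
  have : Nonempty Instr := ⟨reset⟩
  have hcard : Fintype.card Instr = 21 := rfl
  obtain ⟨f⟩ : Nonempty (Instr ↪ (Fin 7 → Bool)) :=
    Function.Embedding.nonempty_of_card_le (by simp [hcard])
  exact ⟨_, Function.invFun_surjective f.injective⟩

/-- A decoding of instructions from seven bits. -/
noncomputable def decode : (Fin 7 → Bool) → Instr := exists_decode.choose

theorem decode_surjective : Function.Surjective decode := exists_decode.choose_spec

/-- The instruction in a block of eight bits. The first bit of a block is not used, so that it can
hold other information; the whole of the first block, marked by `home`, is not used either. -/
noncomputable def ofBlock (home : Bool) (b : Fin 8 → Bool) : Instr :=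
  if home then reset else decode fun r => b r.succ

end Instr

/-- The `n`-th block of eight bits of a real. -/
def block (u : R) (n : ℕ) (r : Fin 8) : Bool := u (8 * n + r)

/-- The instruction in the `n`-th block of a real. -/
noncomputable def instr (u : R) (n : ℕ) : Instr := .ofBlock (n = 0) (block u n)

theorem instr_zero (u : R) : instr u 0 = .reset := by simp [instr, Instr.ofBlock]

/-- The state of the engine: pointer, conjunction, and output. -/
structure Engine where
  ptr : ℕ
  flag : Bool
  out : R

namespace Engine

/-- The execution of an instruction on operand `d` and input `u`. -/
def exec (d u : R) (s : Engine) (i : Instr) : Engine where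
  ptr := i.move s.ptr
  flag := i.flag (d s.ptr) (block u s.ptr) s.flag
  out n := s.out n || (decide (n = s.ptr) && i.stored s.flag)

/-- The state of the engine after `k` instructions. -/
noncomputable def after (u d : R) : ℕ → Engine
  | 0 => ⟨0, true, zeroR⟩
  | k + 1 => (after u d k).exec d u (instr u k)

variable {u d : R}

theorem after_add_one (k : ℕ) : after u d (k + 1) = (after u d k).exec d u (instr u k) := rfl

theorem ptr_after_add_one_le (k : ℕ) : (after u d (k + 1)).ptr ≤ k := by
  induction k with
  | zero => simp [after_add_one, exec, instr_zero, Instr.move]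
  | succ k ih => exact (Instr.move_le _ _).trans (by gcongr)

theorem ptr_after_le (k : ℕ) : (after u d k).ptr ≤ k := by
  cases k with
  | zero => exact le_rfl
  | succ k => exact (ptr_after_add_one_le k).trans k.le_succ

theorem eq_ptr_after_iff (k : ℕ) : k = (after u d k).ptr ↔ k = 0 := by
  cases k with
  | zero => exact iff_of_true rfl rfl
  | succ k => exact iff_of_false (Nat.lt_succ_of_le (ptr_after_add_one_le k)).ne' k.succ_ne_zero

theorem out_after_mono {k l n : ℕ} (hkl : k ≤ l) (h : (after u d k).out n = true) :
    (after u d l).out n = true := by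
  induction hkl with
  | refl => exact h
  | step _ ih => simp [after_add_one, exec, ih]

theorem lt_of_out_after_add_one {k n : ℕ} (h : (after u d (k + 1)).out n = true) : n < k := by
  induction k with
  | zero => simp [after, zeroR, exec, instr_zero, Instr.stored] at h
  | succ k ih =>
    rw [after_add_one] at h
    simp only [exec, Bool.or_eq_true, Bool.and_eq_true, decide_eq_true_eq] at h
    rcases h with h | ⟨rfl, -⟩
    · exact (ih h).trans k.lt_succ_self
    · exact Nat.lt_succ_of_le (ptr_after_add_one_le k)

end Engine

/-- The operator on reals defined by the instructions in `u`. -/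
noncomputable def oper (u d : R) : R := fun n => decide (∃ k, (Engine.after u d k).out n = true)

theorem oper_eq_true {u d : R} {n : ℕ} :
    oper u d n = true ↔ ∃ k, (Engine.after u d k).out n = true := by
  simp [oper]

/-- The transfinite iteration from `zeroR`, with upper limits at limit stages, of the operator
defined by `y`. -/
noncomputable def iter (y : R) : Ordinal.{0} → R :=
  titer zeroR (oper y) fun f a n => lsup (fun b => f b n) a

theorem iter_zero (y : R) : iter y 0 = zeroR := titer_zero

theorem iter_add_one (y : R) (a : Ordinal.{0}) : iter y (a + 1) = oper y (iter y a) :=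
  titer_add_one a

theorem iter_limit (y : R) {a : Ordinal.{0}} (ha : IsSuccLimit a) :
    iter y a = fun n => lsup (fun b => iter y b n) a := by
  refine titer_limit (fun f g a h => ?_) ha
  funext n
  exact lsup_congr fun b hb => by rw [h b hb]

theorem iter_add_congr (y : R) {a b : Ordinal.{0}} (h : iter y a = iter y b) (c : Ordinal.{0}) :
    iter y (a + c) = iter y (b + c) := by
  induction c using ordinal_induction with
  | zero => simpa using h
  | add_one c ih => rw [← add_assoc, ← add_assoc, iter_add_one, iter_add_one, ih]
  | limit c hc ih =>
    rw [iter_limit y (isSuccLimit_add _ hc), iter_limit y (isSuccLimit_add _ hc)]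
    funext n
    rw [lsup_add hc.bot_lt, lsup_add hc.bot_lt]
    exact lsup_congr fun e he => by rw [ih e he]

/-- The tape contents `w` written in blocks: the component of a pair of reals read by a component
of the machine. -/
def comp (w : R) (m : Bool) : R := if m then leftR w else rightR w

section Verdict
variable (w : R)

/-- The real that `rightR w` proposes as a recurring value of `iter (leftR w)`; the bit at 0 is
complemented in order to diagonalize. -/
def target : R := fun n => rightR w (8 * n) ^^ decide (n = 0)

/-- `iter (leftR w)` takes the value `target w` at stage `b`. -/
def Match (b : Ordinal.{0}) : Prop := iter (leftR w) b = target w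

/-- Bit `n` of `iter (rightR w)` drops at stage `a`; at a limit stage there is no such bit. -/
def Drops (a : Ordinal.{0}) (n : ℕ) : Prop :=
  iter (rightR w) (Ordinal.pred a) n = true ∧ iter (rightR w) a n = false

/-- Bit `n` of `iter (rightR w)` has dropped before stage `a`. -/
def Spent (a : Ordinal.{0}) (n : ℕ) : Prop := ∃ b < a, Drops w b n

/-- Some bit of `iter (rightR w)` drops for the first time at stage `a`. -/
def Tick (a : Ordinal.{0}) : Prop := ∃ n, Drops w a n ∧ ¬ Spent w a n

/-- The clock `iter (rightR w)` has not ticked at the last three stages. -/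
def Idle (a : Ordinal.{0}) : Prop :=
  ∃ c, a = c + 3 ∧ ¬ Tick w c ∧ ¬ Tick w (c + 1) ∧ ¬ Tick w (c + 2)

/-- The value of `iter (leftR w)` at the preceding stage exceeds its target, which has been matched
earlier. -/
def Exceeded (a : Ordinal.{0}) : Prop :=
  ∃ c, a = c + 1 ∧ (∃ b < c, Match w b) ∧ ∃ n, iter (leftR w) c n = true ∧ target w n = false

/-- The value of `iter (leftR w)` at the preceding stage is a second match of the target. -/
def Hit (a : Ordinal.{0}) : Prop := ∃ c, a = c + 1 ∧ (∃ b < c, Match w b) ∧ Match w c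

/-- The codes of the pairs of reals `(y, z)` for which the search for a recurring value of `iter y`
succeeds before the clock given by `z` is idle. -/
def accepted : Set R :=
  {w | ∃ a, Hit w a ∧ (∀ b ≤ a, ¬ Exceeded w b) ∧ ∀ b < a, ¬ Idle w b}

end Verdict

/-! ### The decision machine -/

namespace Prog
variable {σ τ : Type*} {p : Prog σ τ} {I J : Conf σ τ → Prop} {c d e : Conf σ τ}

theorem Reach.refl : p.Reach I c c := ⟨0, rfl, by simp⟩

theorem Reach.trans (h : p.Reach I c d) (h' : p.Reach I d e) : p.Reach I c e := by
  obtain ⟨m, hm⟩ := h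
  obtain ⟨n, hn⟩ := h'
  exact ⟨m + n, hm.trans hn⟩

theorem Reach.of_step (hc : I c) (h : p.step c = d) : p.Reach I c d :=
  ⟨1, h, fun m hm => by simpa [Nat.lt_one_iff.1 hm] using hc⟩

theorem Steps.mono {n : ℕ} (h : p.Steps I n c d) (hIJ : ∀ c, I c → J c) : p.Steps J n c d :=
  ⟨h.1, fun m hm => hIJ _ (h.2 m hm)⟩

theorem Reach.walkLeft {q : σ} {C : ℕ → τ → Bool} {h : ℕ}
    (htr : ∀ j, 0 < j → j ≤ h → p.tr q (C j) = (q, C j, false))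
    (hI : ∀ j ≤ h, I ⟨q, j, C⟩) : p.Reach I ⟨q, h, C⟩ ⟨q, 0, C⟩ := by
  induction h with
  | zero => exact Reach.refl
  | succ h ih =>
    refine (Reach.of_step (hI _ le_rfl) ?_).trans
      (ih (fun j h0 hj => htr j h0 (by omega)) fun j hj => hI j (by omega))
    simp [step_mk (htr _ h.succ_pos le_rfl)]

theorem Reach.walkRight {q : σ} {C : ℕ → τ → Bool} {h : ℕ}
    (htr : ∀ j < h, p.tr q (C j) = (q, C j, true))
    (hI : ∀ j < h, I ⟨q, j, C⟩) : p.Reach I ⟨q, 0, C⟩ ⟨q, h, C⟩ := by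
  induction h with
  | zero => exact Reach.refl
  | succ h ih =>
    refine (ih (fun j hj => htr j (by omega)) fun j hj => hI j (by omega)).trans
      (Reach.of_step (hI _ h.lt_succ_self) ?_)
    simp [step_mk (htr _ h.lt_succ_self)]

section Checkpoints
variable {chk : ℕ → Conf σ τ} {I : ℕ → Conf σ τ → Prop}

theorem exists_steps_checkpoint (h : ∀ k, p.Reach (I k) (chk k) (chk (k + 1)))
    (hne : ∀ k, chk k ≠ chk (k + 1)) (k j : ℕ) :
    ∃ n ≥ j, p.Steps (fun c => ∃ l ≥ k, I l c) n (chk k) (chk (k + j)) := by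
  induction j with
  | zero => exact ⟨0, le_rfl, rfl, by simp⟩
  | succ j ih =>
    obtain ⟨n, hn, hs⟩ := ih
    obtain ⟨m, hm⟩ := h (k + j)
    have hm0 : m ≠ 0 := by
      rintro rfl
      exact hne _ hm.1
    exact ⟨n + m, by omega, hs.trans (hm.mono fun c hc => ⟨k + j, by omega, hc⟩)⟩

theorem exists_iterate_step (h : ∀ k, p.Reach (I k) (chk k) (chk (k + 1)))
    (hne : ∀ k, chk k ≠ chk (k + 1)) (k i : ℕ) : ∃ l ≥ k, I l (p.step^[i] (chk k)) := by
  obtain ⟨n, hn, hs⟩ := exists_steps_checkpoint h hne k (i + 1)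
  exact hs.2 i (by omega)

variable {c₀ : ℕ → τ → Bool} {t : Ordinal.{0}}

theorem exists_run_add_lt_omega (ht : p.run c₀ t = chk 0)
    (h : ∀ k, p.Reach (I k) (chk k) (chk (k + 1))) (hne : ∀ k, chk k ≠ chk (k + 1))
    {a : Ordinal.{0}} (ha : a < ω) : ∃ l, I l (p.run c₀ (t + a)) := by
  obtain ⟨i, rfl⟩ := lt_omega0.1 ha
  obtain ⟨l, -, hl⟩ := exists_iterate_step h hne 0 i
  exact ⟨l, by rwa [run_add_nat, ht]⟩

theorem run_add_omega_cell (ht : p.run c₀ t = chk 0)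
    (h : ∀ k, p.Reach (I k) (chk k) (chk (k + 1))) (hne : ∀ k, chk k ≠ chk (k + 1))
    {n k : ℕ} {s : τ} {v : Bool} (hv : ∀ l ≥ k, ∀ c, I l c → c.cell n s = v) :
    (p.run c₀ (t + ω)).cell n s = v := by
  obtain ⟨m, -, hm⟩ := exists_steps_checkpoint h hne 0 k
  rw [run_limit (isSuccLimit_add_omega t), limConf]
  simp only [lsup_add omega0_pos]
  refine lsup_of_eventually (natCast_lt_omega0 m) fun c hmc hc => ?_
  obtain ⟨i, rfl⟩ := lt_omega0.1 hc
  obtain ⟨i, rfl⟩ := exists_add_of_le (Nat.cast_le.1 hmc)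
  obtain ⟨l, hl, hI⟩ := exists_iterate_step h hne k i
  rw [run_add_nat, ht, add_comm, Function.iterate_add_apply, hm.1, zero_add]
  exact hv l hl _ hI

end Checkpoints
end Prog

/-- The tracks of the decision machine, where component `true` is about `leftR w` and component
`false` about `rightR w`. Besides the blocks of the input and the present and preceding iterates
(`val`, `cur`), they hold the bits of the clock that have dropped before (`spent`); and, in cell 0
only, a constant 1 that is turned into the answer (`home`), whether the clock ticked one, two and
three stages ago (`now`, `prev`, `prev2`), whether the target was matched at least two stages ago
(`seen`), was missed one stage ago (`miss`), or exceeded one stage ago (`exceeded`). The frontier of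
a pass and the pointers of the engines are located by `mark` and `ptr`. -/
inductive Track where
  | inp (m : Bool) (r : Fin 8)
  | home
  | cur (m : Bool)
  | val (m : Bool)
  | spent
  | now
  | prev
  | prev2
  | seen
  | miss
  | exceeded
  | mark
  | ptr (m : Bool)
  deriving DecidableEq, Fintype

/-- The tracks with no meaning at limit stages. -/
def Track.isWork : Track → Bool
  | mark => true
  | ptr _ => true
  | _ => false

/-- The contents of a cell of the decision machine. -/
abbrev Cell := Track → Bool

namespace Cell
variable (D : Cell)

/-- The instruction for component `m` in a cell. -/
noncomputable def instr (m : Bool) : Instr := .ofBlock (D .home) fun r => D (.inp m r)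

/-- The bit of the clock drops. -/
def drop : Bool := D (.cur false) && !D (.val false)

/-- The bit of the clock drops for the first time. -/
def fresh : Bool := D.drop && !D .spent

/-- The bit of the target. -/
def target : Bool := D (.inp false 0) ^^ D .home

/-- The iterate differs from the target. -/
def differs : Bool := D (.val true) ^^ D.target

/-- The iterate exceeds the target. -/
def exceeds : Bool := D (.val true) && !D.target

/-- The cell with the bit on track `t` replaced by `b`. -/
def put (t : Track) (b : Bool) : Cell := Function.update D t b

/-- Cell 0 before the first stage. -/
def setup : Cell
  | .home => true
  | .now => true
  | .prev => true
  | .prev2 => true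
  | .miss => true
  | t => D t

/-- Cell 0 at the beginning of a pass. -/
def shift : Cell
  | .prev2 => D .prev
  | .prev => D .now
  | .now => false
  | .seen => D .seen || !D .miss
  | .miss => false
  | .exceeded => false
  | t => D t

/-- A cell when the frontier reaches it. -/
def pick : Cell
  | .cur m => D (.val m)
  | .val _ => false
  | .spent => D .spent || D.drop
  | .mark => true
  | .ptr _ => D .home
  | t => D t

/-- Cell 0 when the bits `a`, `b`, `e` from the frontier are recorded. -/
def record (a b e : Bool) : Cell
  | .now => D .now || a
  | .miss => D .miss || b
  | .exceeded => D .exceeded || (D .seen && e)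
  | t => D t

/-- The cell of the pointer when an instruction is executed. -/
def exec (m : Bool) (i : Instr) (f : Bool) : Cell :=
  (D.put (.val m) (D (.val m) || i.stored f)).put (.ptr m) (!i.moves)

end Cell

set_option synthInstance.maxSize 400 in
/-- The states of the decision machine. In the course of a pass, `f` holds the conjunctions of the
two engines, `i` their instructions and `a`, `b`, `e` the bits to record. -/
inductive Ctl where
  | start
  | wait
  | lim
  | halt
  | frontier (f : Bool → Bool)
  | collect (f : Bool → Bool) (i : Bool → Instr) (a b e : Bool)
  | seek (m : Bool) (f : Bool → Bool) (i : Bool → Instr)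
  | place (m : Bool) (f : Bool → Bool) (i : Bool → Instr)
  | back (m : Bool) (f : Bool → Bool) (i : Bool → Instr) (r : Bool)
  | forth (f : Bool → Bool)
  deriving Fintype

namespace Ctl

/-- The state after the execution of the instruction of component `m`. -/
def next (m : Bool) (f : Bool → Bool) (i : Bool → Instr) : Ctl :=
  if m then seek false f i else forth f

/-- The transition function of the decision machine. A pass goes through the rounds `k = 0, 1, …`,
of which the `k`-th makes cell `k` part of the computation and executes the `k`-th instructions. -/
noncomputable def tr : Ctl → Cell → Ctl × Cell × Bool
  | start, D => (wait, D.setup, false)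
  | wait, D => (wait, D, false)
  | lim, D =>
    if D .exceeded then (halt, D.put .home false, false)
    else if D .seen && !D .miss then (halt, D, false)
    else if D .now || D .prev || D .prev2 then (frontier fun _ => true, D.shift, false)
    else (halt, D.put .home false, false)
  | halt, D => (halt, D, false)
  | frontier f, D => (collect f D.instr D.fresh D.differs D.exceeds, D.pick, false)
  | collect f i a b e, D =>
    if D .home then (seek true f i, D.record a b e, false) else (collect f i a b e, D, false)
  | seek m f i, D =>
    if D (.ptr m) then
      let f' := Function.update f m ((i m).flag (D (.cur m)) (fun r => D (.inp m r)) (f m))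
      (if i m = .inc then place m f' i else back m f' i (i m = .reset),
        D.exec m (i m) (f m), i m = .inc)
    else (seek m f i, D, true)
  | place m f i, D => (back m f i false, D.put (.ptr m) true, false)
  | back m f i r, D =>
    if D .home then (next m f i, D.put (.ptr m) (D (.ptr m) || r), false)
    else (back m f i r, D, false)
  | forth f, D =>
    if D .mark then (frontier f, D.put .mark false, true) else (forth f, D, true)

end Ctl

/-- The decision machine. -/
noncomputable def decider : Prog Ctl Track := ⟨.start, .lim, .halt, Ctl.tr⟩

/-- The tape in the course of a pass that started with the tape `S`: `k` cells have been picked and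
the bits of `j` of them recorded, the engines have the outputs `v`, the pointers are at `P`, and
the frontier is marked if `mk`. -/
noncomputable def midTape (S : ℕ → Cell) (k j : ℕ) (v P : Bool → R) (mk : Bool) (n : ℕ) : Cell
  | .cur m => if n < k then S n (.val m) else S n (.cur m)
  | .val m => if n < k then v m n else S n (.val m)
  | .spent => S n .spent || (decide (n < k) && (S n).drop)
  | .now => S n .now || decide (n = 0 ∧ ∃ l < j, (S l).fresh = true)
  | .miss => S n .miss || decide (n = 0 ∧ ∃ l < j, (S l).differs = true)
  | .exceeded => S n .exceeded || decide (n = 0 ∧ S 0 .seen = true ∧ ∃ l < j, (S l).exceeds = true)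
  | .mark => if n < k then decide (n + 1 = k) && mk else S n .mark
  | .ptr m => if n < k then P m n else S n (.ptr m)
  | t => S n t

section MidTape
variable {S : ℕ → Cell} {k j : ℕ} {v P : Bool → R} {mk : Bool}

theorem instr_midTape (u : Bool → R) (hhome : ∀ n, S n .home = decide (n = 0))
    (hinp : ∀ n m r, S n (.inp m r) = block (u m) n r) (n : ℕ) :
    (midTape S k j v P mk n).instr = fun m => instr (u m) n := by
  funext m
  simp [Cell.instr, instr, midTape, hhome, hinp]

theorem fresh_midTape : (midTape S k j v P mk k).fresh = (S k).fresh := by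
  simp [Cell.fresh, Cell.drop, midTape]

theorem differs_midTape : (midTape S k j v P mk k).differs = (S k).differs := by
  simp [Cell.differs, Cell.target, midTape]

theorem exceeds_midTape : (midTape S k j v P mk k).exceeds = (S k).exceeds := by
  simp [Cell.exceeds, Cell.target, midTape]

theorem update_midTape_pick (hhome : ∀ n, S n .home = decide (n = 0)) (hv : ∀ m, v m k = false)
    (hP : ∀ m, P m k = decide (k = 0)) :
    Function.update (midTape S k j v P false) k (midTape S k j v P false k).pick =
      midTape S (k + 1) j v P true := by
  refine Function.update_eq_iff.2 ⟨?_, fun n hn => ?_⟩ <;> funext t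
  · cases t <;> simp [Cell.pick, Cell.drop, midTape, hv, hP, hhome]
  · have hk : n < k + 1 ↔ n < k := by omega
    cases t <;> simp [midTape, hk, hn]

theorem update_midTape_record :
    Function.update (midTape S k j v P mk) 0
        ((midTape S k j v P mk 0).record (S j).fresh (S j).differs (S j).exceeds) =
      midTape S k (j + 1) v P mk := by
  have hor (f : ℕ → Bool) :
      decide (∃ l ≤ j, f l = true) = (decide (∃ l < j, f l = true) || f j) := by
    rw [Bool.eq_iff_iff]
    simp [le_iff_lt_or_eq, or_and_right, exists_or]
  refine Function.update_eq_iff.2 ⟨?_, fun n hn => ?_⟩ <;> funext t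
  · cases t <;> simp [Cell.record, midTape, hor, Bool.or_assoc, Bool.and_or_distrib_left]
  · cases t <;> simp [midTape, hn]

theorem update_midTape_exec (m : Bool) (i : Instr) (f : Bool) {p : ℕ} (hp : p < k) :
    Function.update (midTape S k j v P mk) p ((midTape S k j v P mk p).exec m i f) =
      midTape S k j (Function.update v m fun n => v m n || (decide (n = p) && i.stored f))
        (Function.update P m (Function.update (P m) p !i.moves)) mk := by
  refine Function.update_eq_iff.2 ⟨?_, fun n hn => ?_⟩ <;> funext t
  · cases t with
    | val m' => rcases eq_or_ne m' m with rfl | h <;> simp [Cell.exec, Cell.put, midTape, *]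
    | ptr m' => rcases eq_or_ne m' m with rfl | h <;> simp [Cell.exec, Cell.put, midTape, *]
    | _ => simp [Cell.exec, Cell.put, midTape]
  · cases t with
    | val m' => rcases eq_or_ne m' m with rfl | h <;> simp [midTape, *]
    | ptr m' => rcases eq_or_ne m' m with rfl | h <;> simp [midTape, *]
    | _ => simp [midTape]

theorem update_midTape_ptr (m b : Bool) {p : ℕ} (hp : p < k) :
    Function.update (midTape S k j v P mk) p ((midTape S k j v P mk p).put (.ptr m) b) =
      midTape S k j v (Function.update P m (Function.update (P m) p b)) mk := by
  refine Function.update_eq_iff.2 ⟨?_, fun n hn => ?_⟩ <;> funext t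
  · cases t with
    | ptr m' => rcases eq_or_ne m' m with rfl | h <;> simp [Cell.put, midTape, *]
    | _ => simp [Cell.put, midTape]
  · cases t with
    | ptr m' => rcases eq_or_ne m' m with rfl | h <;> simp [midTape, *]
    | _ => simp [midTape]

theorem update_midTape_mark :
    Function.update (midTape S (k + 1) j v P true) k
        ((midTape S (k + 1) j v P true k).put .mark false) =
      midTape S (k + 1) j v P false := by
  refine Function.update_eq_iff.2 ⟨?_, fun n hn => ?_⟩ <;> funext t
  · cases t <;> simp [Cell.put, midTape]
  · cases t <;> simp [midTape, hn]

end MidTape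

/-- The configurations before the machine halts whose tape satisfies `I`. -/
def Alive (I : (ℕ → Cell) → Prop) (c : Conf Ctl Track) : Prop := c.state ≠ .halt ∧ I c.cell

section Step
variable {C : ℕ → Cell} {h : ℕ} {f : Bool → Bool} {i : Bool → Instr} {a b e m r : Bool}

theorem step_frontier : decider.step ⟨.frontier f, h, C⟩ =
    ⟨.collect f (C h).instr (C h).fresh (C h).differs (C h).exceeds, h - 1,
      Function.update C h (C h).pick⟩ := rfl

theorem step_collect (hC : C h .home = true) : decider.step ⟨.collect f i a b e, h, C⟩ =
    ⟨.seek true f i, h - 1, Function.update C h ((C h).record a b e)⟩ := by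
  simp [Prog.step, decider, Ctl.tr, hC]

theorem step_seek (hC : C h (.ptr m) = true) : decider.step ⟨.seek m f i, h, C⟩ =
    let f' := Function.update f m ((i m).flag (C h (.cur m)) (fun r => C h (.inp m r)) (f m))
    ⟨if i m = .inc then .place m f' i else .back m f' i (i m = .reset),
      if i m = .inc then h + 1 else h - 1, Function.update C h ((C h).exec m (i m) (f m))⟩ := by
  simp [Prog.step, decider, Ctl.tr, hC]

theorem step_place : decider.step ⟨.place m f i, h, C⟩ =
    ⟨.back m f i false, h - 1, Function.update C h ((C h).put (.ptr m) true)⟩ := rfl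

theorem step_back (hC : C h .home = true) : decider.step ⟨.back m f i r, h, C⟩ =
    ⟨.next m f i, h - 1, Function.update C h ((C h).put (.ptr m) (C h (.ptr m) || r))⟩ := by
  simp [Prog.step, decider, Ctl.tr, hC]

theorem step_forth (hC : C h .mark = true) : decider.step ⟨.forth f, h, C⟩ =
    ⟨.frontier f, h + 1, Function.update C h ((C h).put .mark false)⟩ := by
  simp [Prog.step, decider, Ctl.tr, hC]

end Step

section Round
variable {I : (ℕ → Cell) → Prop} {S : ℕ → Cell} {k j : ℕ} {v P : Bool → R} {mk : Bool}
  {f : Bool → Bool} {i : Bool → Instr}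

theorem reach_seek {u : Bool → R} (hhome : ∀ n, S n .home = decide (n = 0))
    (hinp : ∀ n m r, S n (.inp m r) = block (u m) n r) (hv : ∀ m, v m k = false)
    (hP : ∀ m, P m k = decide (k = 0)) (hI : I (midTape S k k v P false))
    (hI' : I (midTape S (k + 1) k v P true)) :
    decider.Reach (Alive I) ⟨.frontier f, k, midTape S k k v P false⟩
      ⟨.seek true f fun m => instr (u m) k, 0, midTape S (k + 1) (k + 1) v P true⟩ := by
  refine (Prog.Reach.of_step ⟨nofun, hI⟩ step_frontier).trans ?_
  rw [update_midTape_pick hhome hv hP, instr_midTape u hhome hinp, fresh_midTape,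
    differs_midTape, exceeds_midTape]
  refine (Prog.Reach.walkLeft (fun n h0 _ => ?_) fun n _ => ⟨nofun, hI'⟩).trans
    (Prog.Reach.of_step ⟨nofun, hI'⟩ ?_)
  · simp [decider, Ctl.tr, midTape, hhome, h0.ne']
  · rw [step_collect (by simp [midTape, hhome]), update_midTape_record]

theorem reach_next (hhome : ∀ n, S n .home = decide (n = 0)) (m r : Bool) (h : ℕ)
    (hI : I (midTape S (k + 1) j v P mk)) :
    decider.Reach (Alive I) ⟨.back m f i r, h, midTape S (k + 1) j v P mk⟩ ⟨.next m f i, 0,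
      midTape S (k + 1) j v (Function.update P m (Function.update (P m) 0 (P m 0 || r))) mk⟩ := by
  refine (Prog.Reach.walkLeft (fun n h0 _ => ?_) fun n _ => ⟨nofun, hI⟩).trans
    (Prog.Reach.of_step ⟨nofun, hI⟩ ?_)
  · simp [decider, Ctl.tr, midTape, hhome, h0.ne']
  · rw [step_back (by simp [midTape, hhome]), update_midTape_ptr m _ k.succ_pos]
    simp [midTape]

theorem reach_frontier (hI : I (midTape S (k + 1) j v P true)) :
    decider.Reach (Alive I) ⟨.forth f, 0, midTape S (k + 1) j v P true⟩
      ⟨.frontier f, k + 1, midTape S (k + 1) j v P false⟩ := by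
  refine (Prog.Reach.walkRight (h := k) (fun n hn => ?_) fun n _ => ⟨nofun, hI⟩).trans
    (Prog.Reach.of_step ⟨nofun, hI⟩ ?_)
  · simp [decider, Ctl.tr, midTape, hn.ne, hn.trans k.lt_succ_self]
  · rw [step_forth (by simp [midTape]), update_midTape_mark]

/-- The tape in the course of a pass when the engines are in the states `E`. -/
noncomputable def engineTape (S : ℕ → Cell) (k j : ℕ) (E : Bool → Engine) : Bool → ℕ → Cell :=
  midTape S k j (fun m => (E m).out) fun m n => decide (n = (E m).ptr)

theorem engineTape_update {E : Bool → Engine} (m : Bool) (e : Engine) :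
    engineTape S k j (Function.update E m e) mk =
      midTape S k j (Function.update (fun m => (E m).out) m e.out)
        (Function.update (fun m n => decide (n = (E m).ptr)) m fun n => decide (n = e.ptr)) mk := by
  rw [engineTape]
  congr 1 <;> funext m' <;> rcases eq_or_ne m' m with rfl | h <;> simp [*]

theorem update_ptr_back {i : Instr} (hi : i ≠ .inc) (p : ℕ) :
    let Q : R := Function.update (fun n => decide (n = p)) p !i.moves
    Function.update Q 0 (Q 0 || decide (i = .reset)) = fun n => decide (n = i.move p) := by
  intro Q
  funext n
  by_cases hn : n = 0 <;> by_cases hp : n = p <;>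
    cases i <;> simp_all [Q, Function.update_apply, Instr.moves, Instr.move]

theorem update_ptr_place (p : ℕ) :
    let Q : R := Function.update (Function.update (fun n => decide (n = p)) p false) (p + 1) true
    Function.update Q 0 (Q 0 || false) = fun n => decide (n = p + 1) := by
  intro Q
  funext n
  by_cases hn : n = 0 <;> by_cases hp : n = p <;> simp_all [Q, Function.update_apply]

theorem reach_next_of_exec (hhome : ∀ n, S n .home = decide (n = 0)) {m : Bool} {p : ℕ}
    (hpk : (i m).move p ≤ k) (hI : ∀ P, I (midTape S (k + 1) j v P mk)) :
    decider.Reach (Alive I)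
      ⟨if i m = .inc then .place m f i else .back m f i (i m = .reset),
        if i m = .inc then p + 1 else p - 1, midTape S (k + 1) j v
          (Function.update P m (Function.update (fun n => decide (n = p)) p !(i m).moves)) mk⟩
      ⟨.next m f i, 0, midTape S (k + 1) j v
        (Function.update P m fun n => decide (n = (i m).move p)) mk⟩ := by
  by_cases hi : i m = .inc
  · have hp : p + 1 ≤ k := by simpa only [hi, Instr.move] using hpk
    have hmoves : Instr.inc.moves = true := by simp [Instr.moves]
    rw [if_pos hi, if_pos hi]
    refine (Prog.Reach.of_step ⟨nofun, hI _⟩ step_place).trans ?_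
    rw [update_midTape_ptr m true (Nat.lt_succ_of_le hp), Function.update_idem,
      Function.update_self, hi, hmoves]
    have h := reach_next (f := f) (i := i)
      (P := Function.update P m (Function.update (Function.update (fun n => decide (n = p)) p false)
        (p + 1) true)) hhome m false (p + 1 - 1) (hI _)
    rwa [Function.update_idem, Function.update_self, update_ptr_place] at h
  · rw [if_neg hi, if_neg hi]
    have h := reach_next (f := f) (i := i)
      (P := Function.update P m (Function.update (fun n => decide (n = p)) p !(i m).moves))
      hhome m (i m = .reset) (p - 1) (hI _)
    rwa [Function.update_idem, Function.update_self, update_ptr_back hi] at h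

theorem reach_next_of_seek {E : Bool → Engine} {u : R} {m : Bool}
    (hhome : ∀ n, S n .home = decide (n = 0)) (hinp : ∀ n r, S n (.inp m r) = block u n r)
    (hk : (E m).ptr ≤ k) {e : Engine} (he : (E m).exec (fun n => S n (.val m)) u (i m) = e)
    (hek : e.ptr ≤ k) (hI : I (engineTape S (k + 1) j E mk))
    (hI' : ∀ P, I (midTape S (k + 1) j (Function.update (fun m => (E m).out) m e.out) P mk)) :
    decider.Reach (Alive I) ⟨.seek m (fun m => (E m).flag) i, 0, engineTape S (k + 1) j E mk⟩
      ⟨.next m (fun m' => (Function.update E m e m').flag) i, 0,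
        engineTape S (k + 1) j (Function.update E m e) mk⟩ := by
  have hf : (fun m' => (Function.update E m e m').flag) =
      Function.update (fun m => (E m).flag) m e.flag := by
    funext m'
    rcases eq_or_ne m' m with rfl | h <;> simp [*]
  have hlt : (E m).ptr < k + 1 := Nat.lt_succ_of_le hk
  subst he
  refine (Prog.Reach.walkRight (h := (E m).ptr) (fun n hn => ?_) fun n _ => ⟨nofun, hI⟩).trans
    ((Prog.Reach.of_step ⟨nofun, hI⟩ (step_seek (by simp [engineTape, midTape, hlt]))).trans ?_)
  · simp [decider, Ctl.tr, engineTape, midTape, hn.ne, hn.trans hlt]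
  rw [engineTape_update, hf, engineTape, update_midTape_exec m _ _ hlt]
  convert reach_next_of_exec hhome hek hI' using 3
  · rfl
  · simp [midTape, hlt, hinp, Engine.exec]
  · rfl

end Round

section Rounds
variable (S : ℕ → Cell) (u : Bool → R)

/-- The states of the engines after `k` rounds of a pass that started with the tape `S`. -/
noncomputable def engines (k : ℕ) (m : Bool) : Engine :=
  Engine.after (u m) (fun n => S n (.val m)) k

/-- The configuration after `k` rounds of a pass that started with the tape `S`. -/
noncomputable def roundConf (k : ℕ) : Conf Ctl Track :=
  ⟨.frontier fun m => (engines S u k m).flag, k, engineTape S k k (engines S u k) false⟩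

/-- Outside the work tracks, all bits of `C` are as at the beginning or at the end of the round
number `k`. -/
def InRound (k : ℕ) (C : ℕ → Cell) : Prop := ∀ n t, t.isWork = false →
  C n t = (roundConf S u k).cell n t ∨ C n t = (roundConf S u (k + 1)).cell n t

variable {S u} {k K j : ℕ} {v : Bool → R}

theorem out_engines_self (m : Bool) : (engines S u (k + 1) m).out k = false :=
  Bool.eq_false_iff.2 fun h => (Engine.lt_of_out_after_add_one h).false

theorem out_engines_eq_false (m : Bool) : (engines S u k m).out k = false :=
  Bool.eq_false_iff.2 fun h =>
    (Engine.lt_of_out_after_add_one (Engine.out_after_mono k.le_succ h)).false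

theorem inRound_midTape (hK : K = k ∨ K = k + 1) (hj : j = k ∨ j = k + 1)
    (hv : ∀ m, v m = (engines S u k m).out ∨ v m = (engines S u (k + 1) m).out) (P : Bool → R)
    (mk : Bool) : InRound S u k (midTape S K j v P mk) := by
  intro n t ht
  cases t with
  | mark => exact absurd ht nofun
  | ptr m => exact absurd ht nofun
  | val m =>
    rcases lt_trichotomy n k with hn | rfl | hn
    · have hK' : n < K := by omega
      rcases hv m with h | h <;> simp [roundConf, engineTape, midTape, hn.trans k.lt_succ_self, *]
    · rcases hv m with h | h <;> rcases hK with rfl | rfl <;>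
        simp [roundConf, engineTape, midTape, out_engines_self, out_engines_eq_false, *]
    · have hK' : ¬ n < K := by omega
      simp [roundConf, engineTape, midTape, hn.not_gt, *]
  | _ =>
    rcases hK with rfl | rfl <;> rcases hj with rfl | rfl <;> simp [roundConf, engineTape, midTape]

theorem reach_roundConf (hhome : ∀ n, S n .home = decide (n = 0))
    (hinp : ∀ n m r, S n (.inp m r) = block (u m) n r) (k : ℕ) :
    decider.Reach (Alive (InRound S u k)) (roundConf S u k) (roundConf S u (k + 1)) := by
  have hE (m : Bool) : (engines S u k m).exec (fun n => S n (.val m)) (u m) (instr (u m) k) =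
    engines S u (k + 1) m := rfl
  have hle (m : Bool) : (engines S u (k + 1) m).ptr ≤ k := Engine.ptr_after_add_one_le k
  have hP (m : Bool) : decide (k = (engines S u k m).ptr) = decide (k = 0) :=
    decide_eq_decide.2 (Engine.eq_ptr_after_iff k)
  have h₁ := reach_seek (I := InRound S u k) (f := fun m => (engines S u k m).flag) hhome hinp
    out_engines_eq_false (P := fun m n => decide (n = (engines S u k m).ptr)) hP
    (inRound_midTape (.inl rfl) (.inl rfl) (fun _ => .inl rfl) _ _)
    (inRound_midTape (.inr rfl) (.inl rfl) (fun _ => .inl rfl) _ _)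
  have h₂ := reach_next_of_seek (I := InRound S u k) (i := fun m => instr (u m) k) (mk := true)
    (j := k + 1) hhome (hinp · true) (Engine.ptr_after_le k) (hE true) (hle true)
    (inRound_midTape (.inr rfl) (.inr rfl) (fun _ => .inl rfl) _ _)
    fun P => inRound_midTape (.inr rfl) (.inr rfl) (by simp) P _
  have h₃ := reach_next_of_seek (I := InRound S u k) (i := fun m => instr (u m) k) (mk := true)
    (j := k + 1) (E := Function.update (engines S u k) true (engines S u (k + 1) true))
    hhome (hinp · false) (Engine.ptr_after_le k) (hE false) (hle false)
    (inRound_midTape (.inr rfl) (.inr rfl) (by simp) _ _)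
    fun P => inRound_midTape (.inr rfl) (.inr rfl) (by simp) P _
  have hEE : Function.update (Function.update (engines S u k) true (engines S u (k + 1) true))
      false (engines S u (k + 1) false) = engines S u (k + 1) := by
    funext m
    cases m <;> rfl
  rw [hEE] at h₃
  exact h₁.trans (h₂.trans (h₃.trans (reach_frontier
    (inRound_midTape (.inr rfl) (.inr rfl) (fun _ => .inr rfl) _ _))))

end Rounds

section Pass

/-- The tape `C` of a limit stage when the next pass begins. -/
def shiftTape (C : ℕ → Cell) : ℕ → Cell := Function.update C 0 (C 0).shift

/-- The limit of the tapes in a pass that starts with the tape `S`, for components `u` of the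
input. -/
noncomputable def passTape (S : ℕ → Cell) (u : Bool → R) (n : ℕ) : Cell
  | .cur m => S n (.val m)
  | .val m => oper (u m) (fun n => S n (.val m)) n
  | .spent => S n .spent || (S n).drop
  | .now => S n .now || decide (n = 0 ∧ ∃ l, (S l).fresh = true)
  | .miss => S n .miss || decide (n = 0 ∧ ∃ l, (S l).differs = true)
  | .exceeded => S n .exceeded || decide (n = 0 ∧ S 0 .seen = true ∧ ∃ l, (S l).exceeds = true)
  | t => S n t

variable {S C c₀ : ℕ → Cell} {u : Bool → R}

theorem or_passTape_of_roundConf {l n : ℕ} {s : Track} (hs : s.isWork = false)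
    (h : (roundConf S u l).cell n s = true) : S n s = true ∨ passTape S u n s = true := by
  cases s with
  | mark => exact absurd hs nofun
  | ptr m => exact absurd hs nofun
  | cur m =>
    by_cases hn : n < l
    · exact .inr (by simpa [roundConf, engineTape, midTape, passTape, hn] using h)
    · exact .inl (by simpa [roundConf, engineTape, midTape, hn] using h)
  | val m =>
    by_cases hn : n < l
    · refine .inr (oper_eq_true.2 ⟨l, ?_⟩)
      simpa [roundConf, engineTape, midTape, engines, hn] using h
    · exact .inl (by simpa [roundConf, engineTape, midTape, hn] using h)
  | spent | now | miss | exceeded =>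
    simp only [roundConf, engineTape, midTape, Bool.decide_and, Bool.decide_eq_true,
      Bool.or_eq_true, Bool.and_eq_true, decide_eq_true_eq, passTape, or_self_left] at h ⊢
    grind
  | _ => exact .inl h

theorem eventually_or_exists_lt (b : Bool) (q : Prop) [Decidable q] (f : ℕ → Bool) :
    ∃ k, ∀ l ≥ k,
      (b || decide (q ∧ ∃ j < l, f j = true)) = (b || decide (q ∧ ∃ j, f j = true)) := by
  by_cases h : ∃ j, f j = true
  · obtain ⟨j, hj⟩ := h
    exact ⟨j + 1, fun l hl => by
      simp only [show ∃ j, f j = true from ⟨j, hj⟩, show ∃ j < l, f j = true from ⟨j, hl, hj⟩]⟩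
  · exact ⟨0, fun l _ => by
      simp only [h, show ¬ ∃ j < l, f j = true from fun ⟨j, _, hj⟩ => h ⟨j, hj⟩]⟩

theorem eventually_roundConf_cell (n : ℕ) {s : Track} (hs : s.isWork = false) :
    ∃ k, ∀ l ≥ k, (roundConf S u l).cell n s = passTape S u n s := by
  have hn {l : ℕ} (hl : l ≥ n + 1) : n < l := hl
  cases s with
  | mark => exact absurd hs nofun
  | ptr m => exact absurd hs nofun
  | val m =>
    by_cases h : oper (u m) (fun n => S n (.val m)) n = true
    · obtain ⟨k, hk⟩ := oper_eq_true.1 h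
      refine ⟨max (n + 1) k, fun l hl => ?_⟩
      simp only [roundConf, engineTape, midTape, passTape, h,
        if_pos (hn ((le_max_left _ _).trans hl))]
      exact Engine.out_after_mono ((le_max_right _ _).trans hl) hk
    · refine ⟨n + 1, fun l hl => ?_⟩
      simp only [roundConf, engineTape, midTape, passTape, if_pos (hn hl), h]
      exact Bool.eq_false_iff.2 fun hk => h (oper_eq_true.2 ⟨l, hk⟩)
  | cur m | spent =>
    exact ⟨n + 1, fun l hl => by simp [roundConf, engineTape, midTape, passTape, hn hl]⟩
  | now => simpa only [roundConf, engineTape, midTape, passTape] using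
      eventually_or_exists_lt (S n .now) (n = 0) fun l => (S l).fresh
  | miss => simpa only [roundConf, engineTape, midTape, passTape] using
      eventually_or_exists_lt (S n .miss) (n = 0) fun l => (S l).differs
  | exceeded => simpa only [roundConf, engineTape, midTape, passTape, and_assoc] using
      eventually_or_exists_lt (S n .exceeded) (n = 0 ∧ S 0 .seen = true) fun l => (S l).exceeds
  | _ => exact ⟨0, fun l _ => rfl⟩

theorem inRound_cell {l n : ℕ} {s : Track} (hs : s.isWork = false) {b : Bool}
    (h : ∀ k ≥ l, (roundConf S u k).cell n s = b) {D : ℕ → Cell} (hD : InRound S u l D) :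
    D n s = b := by
  rcases hD n s hs with hD | hD
  · exact hD.trans (h l le_rfl)
  · exact hD.trans (h _ l.le_succ)

theorem roundConf_ne (k : ℕ) : roundConf S u k ≠ roundConf S u (k + 1) := fun h =>
  k.succ_ne_self (congrArg Conf.head h).symm

theorem roundConf_zero : roundConf S u 0 = ⟨.frontier fun _ => true, 0, S⟩ := by
  ext1
  · rfl
  · rfl
  · funext n s
    cases s <;> simp [roundConf, engineTape, midTape]

theorem run_pass (hhome : ∀ n, S n .home = decide (n = 0))
    (hinp : ∀ n m r, S n (.inp m r) = block (u m) n r) {t : Ordinal.{0}}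
    (ht : decider.run c₀ t = ⟨.frontier fun _ => true, 0, S⟩) {n : ℕ} {s : Track}
    (hs : s.isWork = false) : (decider.run c₀ (t + ω)).cell n s = passTape S u n s := by
  obtain ⟨k, hk⟩ := eventually_roundConf_cell (S := S) (u := u) n hs
  exact Prog.run_add_omega_cell (ht.trans roundConf_zero.symm) (reach_roundConf hhome hinp)
    roundConf_ne fun l hl c hc => inRound_cell hs (fun j hj => hk j (hl.trans hj)) hc.2

theorem run_during_pass (hhome : ∀ n, S n .home = decide (n = 0))
    (hinp : ∀ n m r, S n (.inp m r) = block (u m) n r) {t : Ordinal.{0}}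
    (ht : decider.run c₀ t = ⟨.frontier fun _ => true, 0, S⟩) {a : Ordinal.{0}} (ha : a < ω) :
    (decider.run c₀ (t + a)).state ≠ .halt ∧ ∀ n s, s.isWork = false →
      (decider.run c₀ (t + a)).cell n s = true → S n s = true ∨ passTape S u n s = true := by
  obtain ⟨l, hl, hr⟩ := Prog.exists_run_add_lt_omega (ht.trans (roundConf_zero (u := u)).symm)
    (reach_roundConf hhome hinp) roundConf_ne ha
  refine ⟨hl, fun n s hs h => ?_⟩
  rcases hr n s hs with hc | hc <;> exact or_passTape_of_roundConf hs (hc.symm.trans h)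

end Pass

/-- The tape at stage `a` of the decision procedure for the input `w`, with empty work tracks. -/
noncomputable def stageTape (w : R) (a : Ordinal.{0}) (n : ℕ) : Cell
  | .inp m r => block (comp w m) n r
  | .home => decide (n = 0)
  | .cur m => iter (comp w m) (Ordinal.pred a) n
  | .val m => iter (comp w m) a n
  | .spent => decide (Spent w a n)
  | .now => decide (n = 0 ∧ ∀ c, a = c + 1 → Tick w c)
  | .prev => decide (n = 0 ∧ ∀ c, a = c + 2 → Tick w c)
  | .prev2 => decide (n = 0 ∧ ∀ c, a = c + 3 → Tick w c)
  | .seen => decide (n = 0 ∧ ∃ b, b + 1 < a ∧ Match w b)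
  | .miss => decide (n = 0 ∧ ∀ c, a = c + 1 → ¬ Match w c)
  | .exceeded => decide (n = 0 ∧ Exceeded w a)
  | .mark => false
  | .ptr _ => false

/-- Outside the work tracks, the tape `C` is that of stage `a`. -/
def IsStageTape (w : R) (a : Ordinal.{0}) (C : ℕ → Cell) : Prop :=
  ∀ n s, s.isWork = false → C n s = stageTape w a n s

theorem ordinal_add_two (a : Ordinal.{0}) : a + 2 = a + 1 + 1 := by
  rw [add_assoc, one_add_one_eq_two]

theorem ordinal_add_three (a : Ordinal.{0}) : a + 3 = a + 1 + 1 + 1 := by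
  rw [← ordinal_add_two a, add_assoc, two_add_one_eq_three]

theorem exists_lt_iff_add_one {P : Ordinal.{0} → Prop} {a : Ordinal.{0}} :
    (∃ b < a, P b) ↔ (∃ b, b + 1 < a ∧ P b) ∨ ∃ b, a = b + 1 ∧ P b := by
  simp only [← exists_or, ← or_and_right]
  exact exists_congr fun b => and_congr_left fun _ => by
    rw [← Order.add_one_le_iff, le_iff_lt_or_eq, eq_comm (a := a)]

theorem spent_add_one {w : R} {a : Ordinal.{0}} {n : ℕ} :
    Spent w (a + 1) n ↔ Spent w a n ∨ Drops w a n := by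
  simp [Spent, le_iff_lt_or_eq, or_and_right, exists_or]

section Stage
variable {w : R} {a : Ordinal.{0}} {C : ℕ → Cell}

theorem shiftTape_eq {s : Track} (hs : ∀ D : Cell, D.shift s = D s) (n : ℕ) :
    shiftTape C n s = C n s := by
  rcases eq_or_ne n 0 with rfl | hn <;> simp [shiftTape, *]

theorem shiftTape_of_ne {n : ℕ} (hn : n ≠ 0) : shiftTape C n = C n := by simp [shiftTape, hn]

theorem shiftTape_zero : shiftTape C 0 = (C 0).shift := by simp [shiftTape]

variable (h : IsStageTape w a C)
include h

theorem shiftTape_home (n : ℕ) : shiftTape C n .home = decide (n = 0) :=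
  (shiftTape_eq (fun _ => rfl) n).trans (h n .home rfl)

theorem shiftTape_inp (n : ℕ) (m : Bool) (r : Fin 8) :
    shiftTape C n (.inp m r) = block (comp w m) n r :=
  (shiftTape_eq (fun _ => rfl) n).trans (h n (.inp m r) rfl)

theorem shiftTape_val (n : ℕ) (m : Bool) : shiftTape C n (.val m) = iter (comp w m) a n :=
  (shiftTape_eq (fun _ => rfl) n).trans (h n (.val m) rfl)

theorem shiftTape_cur (n : ℕ) (m : Bool) :
    shiftTape C n (.cur m) = iter (comp w m) (Ordinal.pred a) n :=
  (shiftTape_eq (fun _ => rfl) n).trans (h n (.cur m) rfl)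

theorem shiftTape_spent (n : ℕ) : shiftTape C n .spent = decide (Spent w a n) :=
  (shiftTape_eq (fun _ => rfl) n).trans (h n .spent rfl)

theorem shiftTape_drop (n : ℕ) : (shiftTape C n).drop = decide (Drops w a n) := by
  rw [Cell.drop, shiftTape_cur h, shiftTape_val h, Bool.eq_iff_iff, decide_eq_true_iff]
  simp [Drops, comp]

theorem shiftTape_target (n : ℕ) : (shiftTape C n).target = target w n := by
  simp [Cell.target, shiftTape_inp h, shiftTape_home h, target, comp, block]

theorem exists_fresh_shiftTape : (∃ n, (shiftTape C n).fresh = true) ↔ Tick w a := by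
  simp [Cell.fresh, shiftTape_drop h, shiftTape_spent h, Tick]

theorem exists_differs_shiftTape : (∃ n, (shiftTape C n).differs = true) ↔ ¬ Match w a := by
  simp [Cell.differs, shiftTape_val h, shiftTape_target h, Match, comp, funext_iff]

theorem exists_exceeds_shiftTape : (∃ n, (shiftTape C n).exceeds = true) ↔
    ∃ n, iter (leftR w) a n = true ∧ target w n = false := by
  simp [Cell.exceeds, shiftTape_val h, shiftTape_target h, comp]

theorem shiftTape_seen (n : ℕ) : shiftTape C n .seen = decide (n = 0 ∧ ∃ b < a, Match w b) := by
  rcases eq_or_ne n 0 with rfl | hn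
  · rw [shiftTape_zero, Cell.shift, h 0 .seen rfl, h 0 .miss rfl, Bool.eq_iff_iff]
    simp [stageTape, exists_lt_iff_add_one]
  · simp [shiftTape_of_ne hn, h n .seen rfl, stageTape, hn]

theorem shiftTape_prev (n : ℕ) :
    shiftTape C n .prev = decide (n = 0 ∧ ∀ c, a = c + 1 → Tick w c) := by
  rcases eq_or_ne n 0 with rfl | hn
  · rw [shiftTape_zero, Cell.shift, h 0 .now rfl, stageTape]
  · simp [shiftTape_of_ne hn, h n .prev rfl, stageTape, hn]

theorem shiftTape_prev2 (n : ℕ) :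
    shiftTape C n .prev2 = decide (n = 0 ∧ ∀ c, a = c + 2 → Tick w c) := by
  rcases eq_or_ne n 0 with rfl | hn
  · rw [shiftTape_zero, Cell.shift, h 0 .prev rfl, stageTape]
  · simp [shiftTape_of_ne hn, h n .prev2 rfl, stageTape, hn]

theorem shiftTape_eq_false {s : Track} (hs : ∀ D : Cell, D.shift s = false)
    (hw : s.isWork = false) (hC : ∀ n ≠ 0, stageTape w a n s = false) (n : ℕ) :
    shiftTape C n s = false := by
  rcases eq_or_ne n 0 with rfl | hn
  · rw [shiftTape_zero, hs]
  · rw [shiftTape_of_ne hn, h n s hw, hC n hn]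

theorem shiftTape_now (n : ℕ) : shiftTape C n .now = false :=
  shiftTape_eq_false h (fun _ => rfl) rfl (fun n hn => by simp [stageTape, hn]) n

theorem shiftTape_miss (n : ℕ) : shiftTape C n .miss = false :=
  shiftTape_eq_false h (fun _ => rfl) rfl (fun n hn => by simp [stageTape, hn]) n

theorem shiftTape_exceeded (n : ℕ) : shiftTape C n .exceeded = false :=
  shiftTape_eq_false h (fun _ => rfl) rfl (fun n hn => by simp [stageTape, hn]) n

theorem passTape_shiftTape : IsStageTape w (a + 1) (passTape (shiftTape C) (comp w)) := by
  intro n s hs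
  cases s with
  | mark => exact absurd hs nofun
  | ptr m => exact absurd hs nofun
  | inp m r => exact shiftTape_inp h n m r
  | home => exact shiftTape_home h n
  | cur m => simp [passTape, shiftTape_val h, stageTape]
  | val m => simp [passTape, shiftTape_val h, stageTape, iter_add_one]
  | spent => simp [passTape, shiftTape_spent h, shiftTape_drop h, stageTape, spent_add_one]
  | now => simp [passTape, shiftTape_now h, exists_fresh_shiftTape h, stageTape]
  | prev => simp [passTape, shiftTape_prev h, stageTape, ordinal_add_two]
  | prev2 => simp [passTape, shiftTape_prev2 h, stageTape, ordinal_add_three, ordinal_add_two]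
  | seen => simp [passTape, shiftTape_seen h, stageTape]
  | miss => simp [passTape, shiftTape_miss h, exists_differs_shiftTape h, stageTape]
  | exceeded => simp [passTape, shiftTape_exceeded h, exists_exceeds_shiftTape h,
      shiftTape_seen h, stageTape, Exceeded]

end Stage

/-! ### Correctness of the decision machine -/

/-- The decision procedure for the input `w` comes to an answer at stage `a`. -/
def Decided (w : R) (a : Ordinal.{0}) : Prop := Exceeded w a ∨ Hit w a ∨ Idle w a

/-- The decision machine is about to begin stage `a` for the input `w`. -/
def AtStage (w : R) (a : Ordinal.{0}) (c : Conf Ctl Track) : Prop :=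
  c.state = .lim ∧ c.head = 0 ∧ IsStageTape w a c.cell

theorem AtStage.eq {w : R} {a : Ordinal.{0}} {c : Conf Ctl Track} (h : AtStage w a c) :
    c = ⟨.lim, 0, c.cell⟩ := Conf.ext h.1 h.2.1 rfl

section Transition
variable {w : R} {a : Ordinal.{0}} {c₀ : ℕ → Cell} {t : Ordinal.{0}}

theorem stageTape_seen_and_not_miss :
    (stageTape w a 0 .seen && !stageTape w a 0 .miss) = decide (Hit w a) := by
  rw [Bool.eq_iff_iff, decide_eq_true_iff]
  simp only [stageTape, true_and, Bool.and_eq_true, decide_eq_true_eq, Bool.not_eq_true',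
    decide_eq_false_iff_not, not_forall, not_not, exists_prop]
  constructor
  · rintro ⟨⟨b, hb, hm⟩, c, rfl, hc⟩
    exact ⟨c, rfl, ⟨b, lt_of_add_lt_add_right hb, hm⟩, hc⟩
  · rintro ⟨c, rfl, ⟨b, hb, hm⟩, hc⟩
    exact ⟨⟨b, Order.succ_lt_succ hb, hm⟩, c, rfl, hc⟩

theorem stageTape_now_or_prev_or_prev2 :
    (stageTape w a 0 .now || stageTape w a 0 .prev || stageTape w a 0 .prev2) =
      !decide (Idle w a) := by
  rw [← Bool.not_inj_iff, Bool.eq_iff_iff, Bool.not_not, decide_eq_true_iff]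
  simp only [stageTape, true_and, Bool.not_or, Bool.and_eq_true, Bool.not_eq_true',
    decide_eq_false_iff_not, not_forall, exists_prop, Idle, ordinal_add_two, ordinal_add_three]
  constructor
  · rintro ⟨⟨⟨c, hc, h₁⟩, d, hd, h₂⟩, e, rfl, h₃⟩
    obtain rfl := add_one_inj.1 hc
    obtain rfl := add_one_inj.1 (add_one_inj.1 hd)
    exact ⟨e, rfl, h₃, h₂, h₁⟩
  · rintro ⟨c, rfl, h₁, h₂, h₃⟩
    exact ⟨⟨⟨_, rfl, h₃⟩, _, rfl, h₂⟩, _, rfl, h₁⟩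

theorem tr_lim {C : ℕ → Cell} (h : IsStageTape w a C) : decider.tr .lim (C 0) =
    if Exceeded w a then (.halt, (C 0).put .home false, false)
    else if Hit w a then (.halt, C 0, false)
    else if Idle w a then (.halt, (C 0).put .home false, false)
    else (.frontier fun _ => true, (C 0).shift, false) := by
  have he : C 0 .exceeded = decide (Exceeded w a) := by simp [h 0 .exceeded rfl, stageTape]
  simp only [decider, Ctl.tr, he, h 0 .seen rfl, h 0 .miss rfl, h 0 .now rfl, h 0 .prev rfl,
    h 0 .prev2 rfl, stageTape_seen_and_not_miss, stageTape_now_or_prev_or_prev2]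
  by_cases hi : Idle w a <;> simp [hi]

theorem step_of_decided {C : ℕ → Cell} (h : IsStageTape w a C) (hd : Decided w a) :
    decider.step ⟨.lim, 0, C⟩ = ⟨.halt, 0, Function.update C 0
      ((C 0).put .home (decide (Hit w a ∧ ¬ Exceeded w a)))⟩ := by
  have hh : (C 0).put .home true = C 0 :=
    Function.update_eq_self_iff.2 (by simp [h 0 .home rfl, stageTape])
  have htr : decider.tr .lim (C 0) =
      (.halt, (C 0).put .home (decide (Hit w a ∧ ¬ Exceeded w a)), false) := by
    rw [tr_lim h]
    by_cases he : Exceeded w a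
    · simp [he]
    by_cases hm : Hit w a
    · simp [he, hm, hh]
    · simp [he, hm, hd.resolve_left he |>.resolve_left hm]
  rw [Prog.step_mk htr, if_neg Bool.false_ne_true]

theorem step_of_not_decided {C : ℕ → Cell} (h : IsStageTape w a C) (hd : ¬ Decided w a) :
    decider.step ⟨.lim, 0, C⟩ = ⟨.frontier fun _ => true, 0, shiftTape C⟩ := by
  simp only [Decided, not_or] at hd
  have htr : decider.tr .lim (C 0) = (.frontier fun _ => true, (C 0).shift, false) := by
    rw [tr_lim h, if_neg hd.1, if_neg hd.2.1, if_neg hd.2.2]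
  rw [Prog.step_mk htr, if_neg Bool.false_ne_true, shiftTape]

theorem run_stage_begin (h : AtStage w a (decider.run c₀ t)) (hd : ¬ Decided w a) :
    decider.run c₀ (t + 1) =
      ⟨.frontier fun _ => true, 0, shiftTape (decider.run c₀ t).cell⟩ := by
  rw [Prog.run_add_one, ← step_of_not_decided h.2.2 hd, ← h.eq]

theorem AtStage.add_one (h : AtStage w a (decider.run c₀ t)) (hd : ¬ Decided w a) :
    AtStage w (a + 1) (decider.run c₀ (t + ω)) := by
  have hlim := Prog.run_limit (p := decider) (c₀ := c₀) (isSuccLimit_add_omega t)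
  refine ⟨by rw [hlim]; rfl, by rw [hlim]; rfl, fun n s hs => ?_⟩
  rw [← one_add_omega0, ← add_assoc, run_pass (shiftTape_home h.2.2) (shiftTape_inp h.2.2)
    (run_stage_begin h hd) hs]
  exact passTape_shiftTape h.2.2 n s hs

theorem or_passTape_of_shiftTape {C : ℕ → Cell} (h : IsStageTape w a C) {u : Bool → R} {n : ℕ}
    {s : Track} (hs : s.isWork = false) (hn : shiftTape C n s = true) :
    stageTape w a n s = true ∨ passTape (shiftTape C) u n s = true := by
  cases s with
  | mark => exact absurd hs nofun
  | ptr m => exact absurd hs nofun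
  | now => exact absurd hn (by simp [shiftTape_now h])
  | miss => exact absurd hn (by simp [shiftTape_miss h])
  | exceeded => exact absurd hn (by simp [shiftTape_exceeded h])
  | prev | prev2 | seen => exact .inr hn
  | _ => exact .inl (by rwa [shiftTape_eq fun _ => rfl, h n _ rfl] at hn)

theorem AtStage.run_add (h : AtStage w a (decider.run c₀ t)) (hd : ¬ Decided w a)
    {b : Ordinal.{0}} (hb : b < ω) : (decider.run c₀ (t + b)).state ≠ .halt ∧
      ∀ n s, s.isWork = false → (decider.run c₀ (t + b)).cell n s = true →
        stageTape w a n s = true ∨ stageTape w (a + 1) n s = true := by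
  rcases eq_or_ne b 0 with rfl | hb0
  · rw [add_zero]
    exact ⟨by rw [h.1]; exact nofun, fun n s hs hn => .inl ((h.2.2 n s hs).symm.trans hn)⟩
  obtain ⟨b, rfl⟩ := exists_add_of_le (Order.one_le_iff_pos.2 (pos_iff_ne_zero.2 hb0))
  obtain ⟨hne, hor⟩ := run_during_pass (shiftTape_home h.2.2) (shiftTape_inp h.2.2)
    (run_stage_begin h hd) (le_add_self.trans_lt hb)
  rw [← add_assoc]
  refine ⟨hne, fun n s hs hn => ?_⟩
  rw [← passTape_shiftTape h.2.2 n s hs]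
  exact (hor n s hs hn).elim (or_passTape_of_shiftTape h.2.2 hs) .inr

end Transition

section Limit
variable {w : R} {a : Ordinal.{0}}

theorem lsup_decide_of_mono {P : Ordinal.{0} → Prop} [DecidablePred P] (ha : IsSuccLimit a)
    (hP : ∀ b c, b ≤ c → P b → P c) (hPa : P a ↔ ∃ b < a, P b) :
    lsup (fun b => decide (P b)) a = decide (P a) := by
  by_cases h : P a
  · obtain ⟨b, hb, hPb⟩ := hPa.1 h
    exact lsup_of_eventually hb fun c hbc _ => by simp [h, hP b c hbc hPb]
  · have hc {c : Ordinal.{0}} (hca : c < a) : ¬ P c := fun hPc => h (hPa.2 ⟨c, hca, hPc⟩)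
    exact lsup_of_eventually ha.bot_lt fun c _ hca => by simp [h, hc hca]

theorem lsup_pred {f : Ordinal.{0} → Bool} (ha : IsSuccLimit a) :
    lsup (fun b => f (Ordinal.pred b)) a = lsup f a := by
  rw [Bool.eq_iff_iff, lsup_eq_true, lsup_eq_true]
  constructor
  · intro h b hb
    obtain ⟨c, hbc, hca, hc⟩ := h (b + 1) (ha.add_one_lt hb)
    exact ⟨_, (pred_add_one b).symm.le.trans (pred_succ_gi.gc.monotone_l hbc),
      (pred_le_self c).trans_lt hca, hc⟩
  · intro h b hb
    obtain ⟨c, hbc, hca, hc⟩ := h b hb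
    exact ⟨c + 1, hbc.trans le_self_add, ha.add_one_lt hca, by rwa [pred_add_one]⟩

theorem lsup_of_frequently {P : Ordinal.{0} → Prop} (ha : IsSuccLimit a)
    (hP : ∀ b < a, ∃ k : ℕ, P (b + k)) {j : ℕ} (hj : 0 < j) (q : Prop) [Decidable q] :
    lsup (fun b => decide (q ∧ ∀ c, b = c + j → P c)) a =
      decide (q ∧ ∀ c, a = c + j → P c) := by
  by_cases hq : q
  · have hja (c : Ordinal.{0}) : a ≠ c + j := by
      obtain ⟨j, rfl⟩ := Nat.exists_eq_add_one_of_ne_zero hj.ne'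
      rw [Nat.cast_succ, ← add_assoc]
      exact (ha.succ_ne _).symm
    simp only [hq, true_and, hja, false_imp_iff, implies_true, decide_true]
    refine lsup_eq_true.2 fun b hb => ?_
    obtain ⟨k, hk⟩ := hP b hb
    refine ⟨b + k + j, le_self_add.trans le_self_add,
      ha.add_natCast_lt (ha.add_natCast_lt hb k) j, decide_eq_true fun c hc => ?_⟩
    rwa [← (Ordinal.add_right_cancel j).1 hc]
  · exact lsup_of_eventually ha.bot_lt fun c _ _ => by simp [hq]

theorem exists_tick_of_not_idle {b : Ordinal.{0}} (h : ¬ Idle w (b + 3)) :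
    ∃ k : ℕ, Tick w (b + k) := by
  by_contra! hk
  exact h ⟨b, rfl, by simpa using hk 0, by simpa using hk 1, by simpa using hk 2⟩

theorem exists_not_match_of_not_hit {b : Ordinal.{0}} (h : ¬ Hit w (b + 2)) :
    ∃ k : ℕ, ¬ Match w (b + k) := by
  by_contra! hk
  rw [ordinal_add_two] at h
  exact h ⟨b + 1, rfl, ⟨b, by simp, by simpa using hk 0⟩, by simpa using hk 1⟩

theorem lsup_stageTape (ha : IsSuccLimit a) (hd : ∀ b < a, ¬ Decided w b) (n : ℕ) {s : Track}
    (hs : s.isWork = false) : lsup (fun b => stageTape w b n s) a = stageTape w a n s := by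
  have htick (b) (hb : b < a) : ∃ k : ℕ, Tick w (b + k) :=
    exists_tick_of_not_idle fun h => hd _ (ha.add_natCast_lt hb 3) (.inr (.inr h))
  have hmiss (b) (hb : b < a) : ∃ k : ℕ, ¬ Match w (b + k) :=
    exists_not_match_of_not_hit fun h => hd _ (ha.add_natCast_lt hb 2) (.inr (.inl h))
  cases s with
  | mark => exact absurd hs nofun
  | ptr m => exact absurd hs nofun
  | inp m r => exact lsup_of_eventually ha.bot_lt fun _ _ _ => rfl
  | home => exact lsup_of_eventually ha.bot_lt fun _ _ _ => rfl
  | cur m => simp only [stageTape, lsup_pred (f := fun b => iter (comp w m) b n) ha,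
      ha.ordinalPred_eq, iter_limit _ ha]
  | val m => simp only [stageTape, iter_limit _ ha]
  | spent =>
    refine lsup_decide_of_mono ha (fun b c hbc ⟨e, he, h⟩ => ⟨e, he.trans_le hbc, h⟩)
      ⟨fun ⟨b, hb, h⟩ => ⟨b + 1, ha.add_one_lt hb, b, by simp, h⟩,
        fun ⟨b, hb, c, hc, h⟩ => ⟨c, hc.trans hb, h⟩⟩
  | now => simpa [stageTape] using lsup_of_frequently ha htick one_pos (n = 0)
  | prev => simpa [stageTape] using lsup_of_frequently ha htick two_pos (n = 0)
  | prev2 => simpa [stageTape] using lsup_of_frequently ha htick three_pos (n = 0)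
  | seen =>
    refine lsup_decide_of_mono (P := fun b => n = 0 ∧ ∃ c, c + 1 < b ∧ Match w c) ha
      (fun b c hbc ⟨hn, e, he, h⟩ => ⟨hn, e, he.trans_le hbc, h⟩)
      ⟨fun ⟨hn, b, hb, h⟩ => ⟨b + 1 + 1, ha.add_one_lt hb, hn, b, by simp, h⟩,
        fun ⟨b, hb, hn, c, hc, h⟩ => ⟨hn, c, hc.trans hb, h⟩⟩
  | miss =>
    simpa [stageTape] using
      lsup_of_frequently (P := fun b => ¬ Match w b) ha hmiss one_pos (n = 0)
  | exceeded =>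
    have h : ¬ Exceeded w a := fun ⟨c, hc, _⟩ => ha.succ_ne c hc.symm
    have hlt {b : Ordinal.{0}} (hb : b < a) : ¬ Exceeded w b := fun he => hd b hb (.inl he)
    exact lsup_of_eventually ha.bot_lt fun b _ hb => by simp [stageTape, h, hlt hb]

end Limit

/-- The tape with the input `w`. -/
def inputCells (w : R) (n : ℕ) : Cell
  | .inp m r => block (comp w m) n r
  | _ => false

section Run
variable {w : R} {a : Ordinal.{0}}

theorem run_one_add_nat (k : ℕ) : decider.run (inputCells w) (1 + k) =
    ⟨.wait, 0, Function.update (inputCells w) 0 (inputCells w 0).setup⟩ := by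
  induction k with
  | zero => rw [Nat.cast_zero, add_zero, ← zero_add 1, Prog.run_add_one, Prog.run_zero]; rfl
  | succ k ih =>
    rw [Nat.cast_succ, ← add_assoc, Prog.run_add_one, ih]
    simp [Prog.step, decider, Ctl.tr]

theorem run_state_ne_halt_of_lt_omega {b : Ordinal.{0}} (hb : b < ω) :
    (decider.run (inputCells w) b).state ≠ .halt := by
  obtain ⟨k, rfl⟩ := lt_omega0.1 hb
  cases k with
  | zero => rw [Nat.cast_zero, Prog.run_zero]; exact nofun
  | succ k => rw [add_comm, Nat.cast_add, Nat.cast_one, run_one_add_nat]; exact nofun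

theorem isStageTape_zero :
    IsStageTape w 0 (Function.update (inputCells w) 0 (inputCells w 0).setup) := by
  have h0 (c : Ordinal.{0}) : 0 ≠ c + 1 := (succ_ne_bot c).symm
  intro n s hs
  rcases eq_or_ne n 0 with rfl | hn
  · cases s <;> simp_all [Cell.setup, inputCells, stageTape, iter_zero, zeroR, Spent, Exceeded,
      Track.isWork, ordinal_add_two, ordinal_add_three]
  · cases s <;> simp_all [inputCells, stageTape, iter_zero, zeroR, Spent, Track.isWork]

theorem atStage_zero : AtStage w 0 (decider.run (inputCells w) ω) := by
  rw [Prog.run_limit isSuccLimit_omega0]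
  refine ⟨rfl, rfl, fun n s hs => ?_⟩
  rw [← isStageTape_zero n s hs]
  refine lsup_of_eventually one_lt_omega0 fun c hc hcω => ?_
  obtain ⟨c, rfl⟩ := exists_add_of_le hc
  obtain ⟨k, rfl⟩ := lt_omega0.1 (le_add_self.trans_lt hcω)
  rw [run_one_add_nat]

theorem atStage_run (hd : ∀ b < a, ¬ Decided w b) :
    AtStage w a (decider.run (inputCells w) (ω + ω * a)) := by
  induction a using ordinal_induction with
  | zero => simpa using atStage_zero
  | add_one a ih =>
    rw [mul_add_one, ← add_assoc]
    exact (ih fun b hb => hd b (hb.trans (by simp))).add_one (hd a (by simp))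
  | limit a ha ih =>
    have hstage (b) (hb : b < a) := ih b hb fun c hc => hd c (hc.trans hb)
    have hω : IsSuccLimit (ω * a) := isSuccLimit_mul_right omega0_pos ha
    rw [Prog.run_limit (isSuccLimit_add _ hω)]
    refine ⟨rfl, rfl, fun n s hs => ?_⟩
    rw [← lsup_stageTape ha hd n hs]
    refine (lsup_add hω.bot_lt).trans ((lsup_mul omega0_pos ha fun b hb c hc h => ?_).trans ?_)
    · rw [(hstage b hb).2.2 n s hs, (hstage _ (ha.add_one_lt hb)).2.2 n s hs]
      rw [← add_assoc] at h
      exact ((hstage b hb).run_add (hd b hb) hc).2 n s hs h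
    · exact lsup_congr fun b hb => (hstage b hb).2.2 n s hs

theorem run_state_ne_halt (hd : ∀ b < a, ¬ Decided w b) {c : Ordinal.{0}} (hc : c < ω + ω * a) :
    (decider.run (inputCells w) c).state ≠ .halt := by
  rcases lt_or_ge c ω with hcω | hωc
  · exact run_state_ne_halt_of_lt_omega hcω
  obtain ⟨c, rfl⟩ := exists_add_of_le hωc
  have hlt : c / ω < a :=
    (Ordinal.lt_mul_iff_div_lt omega0_ne_zero).1 ((add_lt_add_iff_left _).1 hc)
  rw [← Ordinal.div_add_mod c ω, ← add_assoc]
  exact ((atStage_run fun b hb => hd b (hb.trans hlt)).run_add (hd _ hlt)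
    (Ordinal.mod_lt c omega0_ne_zero)).1

theorem run_decided (ha : Decided w a) (hd : ∀ b < a, ¬ Decided w b) :
    decider.HaltsAt (inputCells w) (ω + ω * a + 1) ∧
      ∀ n, (decider.run (inputCells w) (ω + ω * a + 1)).cell n .home =
        decide (n = 0 ∧ Hit w a ∧ ¬ Exceeded w a) := by
  have hstage := atStage_run hd
  have hrun := step_of_decided hstage.2.2 ha
  rw [← hstage.eq, ← Prog.run_add_one] at hrun
  refine ⟨⟨congrArg Conf.state hrun, fun b hb => ?_⟩, fun n => ?_⟩
  · rcases (Order.lt_succ_iff.1 hb).lt_or_eq with hb | rfl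
    · exact run_state_ne_halt hd hb
    · rw [hstage.1]
      exact nofun
  · rw [hrun]
    rcases eq_or_ne n 0 with rfl | hn
    · simp [Cell.put]
    · simp [hn, hstage.2.2 n .home rfl, stageTape]

end Run

section Termination
variable {w : R}

theorem injOn_tick (f : Ordinal.{0} → ℕ)
    (hf : ∀ a, Tick w a → Drops w a (f a) ∧ ¬ Spent w a (f a)) : Set.InjOn f {a | Tick w a} := by
  intro a ha b hb hab
  by_contra hne
  rcases lt_or_gt_of_ne hne with h | h
  · exact (hf b hb).2 ⟨a, h, hab ▸ (hf a ha).1⟩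
  · exact (hf a ha).2 ⟨b, h, hab ▸ (hf b hb).1⟩

theorem bddAbove_tick : BddAbove {a | Tick w a} := by
  have hex (a) : ∃ n, Tick w a → Drops w a n ∧ ¬ Spent w a n := by
    by_cases h : Tick w a
    · exact h.imp fun n hn _ => hn
    · exact ⟨0, fun h' => absurd h' h⟩
  choose f hf using hex
  have : Countable {a | Tick w a} :=
    (Set.mapsTo_univ f _).countable_of_injOn (injOn_tick f hf) Set.countable_univ
  exact Ordinal.bddAbove_of_small

theorem exists_idle (w : R) : ∃ a, Idle w a := by
  obtain ⟨b, hb⟩ := bddAbove_tick (w := w)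
  have key (c) (hc : b < c) : ¬ Tick w c := fun h => (hb h).not_gt hc
  have h (k : Ordinal.{0}) : b < b + 1 + k := (lt_add_one b).trans_le le_self_add
  exact ⟨_, b + 1, rfl, key _ (lt_add_one b), key _ (h 1), key _ (h 2)⟩

theorem exists_first_decided (w : R) : ∃ a, Decided w a ∧ ∀ b < a, ¬ Decided w b := by
  obtain ⟨a, ha⟩ := exists_idle w
  obtain ⟨b, hb, hmin⟩ := WellFounded.has_min (wellFounded_lt (α := Ordinal.{0})) {a | Decided w a}
    ⟨a, .inr (.inr ha)⟩
  exact ⟨b, hb, fun c hc h => hmin c h hc⟩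

theorem mem_accepted_iff {a : Ordinal.{0}} (ha : Decided w a) (hd : ∀ b < a, ¬ Decided w b) :
    w ∈ accepted ↔ Hit w a ∧ ¬ Exceeded w a := by
  constructor
  · rintro ⟨c, hc, he, hi⟩
    have hac : a ≤ c := not_lt.1 fun h => hd c h (.inr (.inl hc))
    refine ⟨?_, he a hac⟩
    rcases hac.eq_or_lt with rfl | hlt
    · exact hc
    · exact (ha.resolve_left (he a hac)).resolve_right (hi a hlt)
  · rintro ⟨hh, he⟩
    refine ⟨a, hh, fun b hb => ?_, fun b hb h => hd b hb (.inr (.inr h))⟩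
    rcases hb.eq_or_lt with rfl | hlt
    · exact he
    · exact fun h => hd b hlt (.inl h)

end Termination

/-- The place of a track in the blocks of a bit tape. The blocks of both components of the input
are interleaved on the input tape, and the answer is on the output tape. -/
def Track.pos : Track → Fin 3 × Fin 16
  | inp m r => (0, ⟨2 * r + (if m then 0 else 1), by split <;> omega⟩)
  | home => (2, 0)
  | cur m => (1, if m then 0 else 1)
  | val m => (1, if m then 2 else 3)
  | ptr m => (1, if m then 4 else 5)
  | spent => (1, 6)
  | now => (1, 7)
  | prev => (1, 8)
  | prev2 => (1, 9)
  | seen => (1, 10)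
  | miss => (1, 11)
  | exceeded => (1, 12)
  | mark => (1, 13)

set_option maxRecDepth 2000 in
theorem Track.pos_injective : Function.Injective Track.pos := by decide

theorem encTape_eq {C : ℕ → Cell} {n : ℕ} {t : Track} {i : Fin 3}
    (ht : t.pos = (i, Fin.ofNat 16 n)) : encTape Track.pos C n i = C (n / 16) t := by
  have h := congrFun (decCell_encCell Track.pos_injective (C (n / 16))) t
  rwa [decCell, ht] at h

theorem encTape_inputCells (w : R) : encTape Track.pos (inputCells w) = Prog.inputTape w := by
  funext n i
  by_cases hi : i = 0
  · have hpos : (Track.inp (n % 2 = 0) ⟨n % 16 / 2, by omega⟩).pos = (i, Fin.ofNat 16 n) := by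
      by_cases hn : n % 2 = 0 <;>
        simp only [Track.pos, hn, decide_true, decide_false, Bool.false_eq_true, ↓reduceIte,
          add_zero, hi, Fin.ofNat_eq_cast, Prod.mk.injEq, Fin.ext_iff, Fin.val_natCast, true_and,
          Fin.isValue] <;> omega
    rw [encTape_eq hpos, Prog.inputTape, if_pos hi]
    by_cases hn : n % 2 = 0 <;>
      simp only [inputCells, block, comp, hn, decide_true, decide_false, Bool.false_eq_true,
        ↓reduceIte, leftR, rightR] <;> congr 1 <;> omega
  · rw [Prog.inputTape, if_neg hi, encTape, encCell, decide_eq_false_iff_not]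
    rintro ⟨t, ht, hc⟩
    cases t <;> simp_all [inputCells, Track.pos]

theorem encTape_home (C : ℕ → Cell) (n : ℕ) :
    encTape Track.pos C n 2 = (decide (n % 16 = 0) && C (n / 16) .home) := by
  by_cases hn : n % 16 = 0
  · rw [encTape_eq (t := .home) (by simp [Track.pos, Fin.ext_iff, hn]), hn]
    simp
  · rw [decide_eq_false hn, Bool.false_and, encTape, encCell, decide_eq_false_iff_not]
    rintro ⟨t, ht, -⟩
    cases t <;> simp [Track.pos, Fin.ext_iff] at ht
    omega

theorem decidable_accepted : ITTMDecidable accepted := by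
  obtain ⟨M, hM⟩ := exists_machine_of_prog Track.pos decider Track.pos_injective
  refine ⟨M, fun w => ?_⟩
  obtain ⟨a, ha, hd⟩ := exists_first_decided w
  obtain ⟨hhalt, hhome⟩ := run_decided ha hd
  have hout := hM w _ _ (encTape_inputCells w) hhalt
  simp only [encTape_home, hhome, ← mem_accepted_iff ha hd] at hout
  refine ⟨fun hw => ?_, fun hw => ?_⟩
  · convert hout using 2 with n
    simp only [oneR, hw, and_true, ← Bool.decide_and, decide_eq_decide]
    omega
  · convert hout using 2 with n
    simp [zeroR, hw]

/-! ### The recursion theorem for open operators -/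

theorem exists_seq_of_prefix {α : Type*} {L : ℕ → List α} (hL : ∀ i, L i <+: L (i + 1))
    (hlen : ∀ i, i ≤ (L i).length) :
    ∃ s : ℕ → α, ∀ i, (List.range (L i).length).map s = L i := by
  have hmono {i j} (hij : i ≤ j) : L i <+: L j := by
    induction hij with
    | refl => exact List.prefix_rfl
    | step _ ih => exact ih.trans (hL _)
  refine ⟨fun k => (L (k + 1))[k]'(hlen (k + 1)), fun i => ?_⟩
  refine List.ext_getElem (by simp) fun k _ hk => ?_
  simp only [List.getElem_map, List.getElem_range]
  rcases le_total i (k + 1) with h | h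
  · exact ((hmono h).getElem hk).symm
  · exact (hmono h).getElem _

theorem exists_real_of_instr (x : R) (s : ℕ → Instr) :
    ∃ u : R, (∀ n, u (8 * n) = x n) ∧ ∀ k, instr u (k + 1) = s k := by
  choose g hg using fun k => Instr.decode_surjective (s k)
  let u : R := fun m => (Fin.cons (x (m / 8)) (g (m / 8 - 1)) : Fin 8 → Bool) (Fin.ofNat 8 m)
  have hu (n) : block u n = Fin.cons (x n) (g (n - 1)) := by
    funext r
    have hr : Fin.ofNat 8 (8 * n + r) = r := by ext; simp [Fin.ofNat]
    have hn : (8 * n + r) / 8 = n := by omega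
    simp only [block, u, hr, hn]
  refine ⟨u, fun n => congrFun (hu n) 0, fun k => ?_⟩
  rw [instr, hu, ← hg k]
  rfl

/-- A condition on a bit of the operand, or of the input, of the engine. -/
inductive Literal where
  | operand (k : ℕ) (b : Bool)
  | input (k : ℕ) (b : Bool)
  deriving Countable

/-- The literal holds for operand `d` and input `u`. -/
def Literal.Sat (d u : R) : Literal → Prop
  | operand k b => d k = b
  | input k b => u k = b

/-- The instructions that move the pointer to cell `n` and execute `i` there. -/
def Instr.atCell (n : ℕ) (i : Instr) : List Instr :=
  reset :: (List.replicate n inc ++ [i])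

/-- The instructions that add a literal to the conjunction of the engine. -/
def Literal.word : Literal → List Instr
  | operand k b => Instr.atCell k (.operandIs b)
  | input k b => Instr.atCell (k / 8) (.inputIs (Fin.ofNat 8 k) b)

/-- A conjunction of literals together with a cell in which to store its value. -/
abbrev Clause := List Literal × ℕ

/-- The clause applies to operand `d` and input `u`. -/
def Clause.Sat (d u : R) (c : Clause) : Prop := ∀ l ∈ c.1, l.Sat d u

/-- The instructions that evaluate a clause. -/
def Clause.word (c : Clause) : List Instr := c.1.flatMap Literal.word ++ Instr.atCell c.2 .store

namespace Engine
variable (d u : R)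

/-- The state of the engine after a list of instructions. -/
def execList (l : List Instr) (s : Engine) : Engine := l.foldl (exec d u) s

theorem execList_append (l l' : List Instr) (s : Engine) :
    execList d u (l ++ l') s = execList d u l' (execList d u l s) := List.foldl_append

theorem execList_replicate_inc (n : ℕ) (s : Engine) :
    execList d u (List.replicate n .inc) s = { s with ptr := s.ptr + n } := by
  induction n with
  | zero => rfl
  | succ n ih =>
    rw [List.replicate_succ', execList_append, ih]
    simp [execList, exec, Instr.move, Instr.flag, Instr.stored, add_assoc]

theorem execList_atCell (n : ℕ) (i : Instr) (s : Engine) :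
    execList d u (Instr.atCell n i) s = exec d u { s with ptr := n } i := by
  rw [Instr.atCell, ← List.singleton_append, execList_append, execList_append,
    execList_replicate_inc]
  simp [execList, exec, Instr.move, Instr.flag, Instr.stored]

theorem out_execList_word (l : Literal) (s : Engine) : (execList d u l.word s).out = s.out := by
  cases l <;> simp [Literal.word, execList_atCell, exec, Instr.stored]

theorem flag_execList_word (l : Literal) (s : Engine) :
    (execList d u l.word s).flag = true ↔ s.flag = true ∧ l.Sat d u := by
  cases l <;>
    simp [Literal.word, execList_atCell, exec, Instr.flag, Literal.Sat, block, Nat.div_add_mod]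

theorem out_execList_flatMap_word (l : List Literal) (s : Engine) :
    (execList d u (l.flatMap Literal.word) s).out = s.out := by
  induction l generalizing s with
  | nil => rfl
  | cons a l ih => rw [List.flatMap_cons, execList_append, ih, out_execList_word]

theorem flag_execList_flatMap_word (l : List Literal) (s : Engine) :
    (execList d u (l.flatMap Literal.word) s).flag = true ↔
      s.flag = true ∧ ∀ a ∈ l, a.Sat d u := by
  induction l generalizing s with
  | nil => simp [execList]
  | cons a l ih =>
    rw [List.flatMap_cons, execList_append, ih, flag_execList_word, List.forall_mem_cons, and_assoc]

theorem flag_execList_clause (c : Clause) (s : Engine) :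
    (execList d u c.word s).flag = true := by
  rw [Clause.word, execList_append, execList_atCell]
  rfl

theorem out_execList_clause (c : Clause) {s : Engine} (hs : s.flag = true) (n : ℕ) :
    (execList d u c.word s).out n = true ↔ s.out n = true ∨ c.2 = n ∧ c.Sat d u := by
  rw [Clause.word, execList_append, execList_atCell]
  simp only [exec, Instr.stored, out_execList_flatMap_word, Bool.or_eq_true, Bool.and_eq_true,
    decide_eq_true_eq, flag_execList_flatMap_word, hs, true_and, eq_comm (a := n), Clause.Sat]

variable {d u}

theorem after_one : after u d 1 = ⟨0, true, zeroR⟩ := by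
  simp [after, exec, instr_zero, Instr.move, Instr.flag, Instr.stored]

theorem after_add_one_eq_execList (k : ℕ) : after u d (k + 1) =
    execList d u ((List.range k).map fun j => instr u (j + 1)) ⟨0, true, zeroR⟩ := by
  induction k with
  | zero => exact after_one
  | succ k ih => rw [List.range_succ, List.map_append, execList_append, ← ih]; rfl

theorem execList_flatMap_clause (g : ℕ → Clause) (i : ℕ) :
    (execList d u ((List.range i).flatMap fun j => (g j).word) ⟨0, true, zeroR⟩).flag = true ∧
    ∀ n, (execList d u ((List.range i).flatMap fun j => (g j).word) ⟨0, true, zeroR⟩).out n = true ↔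
      ∃ j < i, (g j).2 = n ∧ (g j).Sat d u := by
  induction i with
  | zero => simp [execList, zeroR]
  | succ i ih =>
    rw [List.range_succ, List.flatMap_append, execList_append, List.flatMap_singleton]
    refine ⟨flag_execList_clause d u _ _, fun n => ?_⟩
    rw [out_execList_clause d u _ ih.1, ih.2, Nat.exists_lt_succ_right]

end Engine

theorem exists_oper_eq_of_clauses (g : ℕ → Clause) (x : R) :
    ∃ u : R, (∀ n, u (8 * n) = x n) ∧
      ∀ d n, oper u d n = true ↔ ∃ i, (g i).2 = n ∧ (g i).Sat d u := by
  let L (i : ℕ) : List Instr := (List.range i).flatMap fun j => (g j).word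
  have hL (i) : L (i + 1) = L i ++ (g i).word := by
    simp only [L, List.range_succ, List.flatMap_append, List.flatMap_singleton]
  have hlen (i) : i ≤ (L i).length := by
    induction i with
    | zero => exact Nat.zero_le _
    | succ i ih =>
      rw [hL]
      simp only [Clause.word, Instr.atCell, List.length_append, List.length_cons]
      omega
  obtain ⟨s, hs⟩ := exists_seq_of_prefix (fun i => ⟨_, (hL i).symm⟩) hlen
  obtain ⟨u, hux, hu⟩ := exists_real_of_instr x s
  have hafter (d i) : (Engine.after u d ((L i).length + 1)) =
      Engine.execList d u (L i) ⟨0, true, zeroR⟩ := by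
    simp only [Engine.after_add_one_eq_execList, hu, hs]
  refine ⟨u, hux, fun d n => ?_⟩
  rw [oper_eq_true]
  constructor
  · rintro ⟨k, hk⟩
    have := Engine.out_after_mono ((hlen k).trans (Nat.le_add_right _ 1)) hk
    rw [hafter, (Engine.execList_flatMap_clause g k).2] at this
    exact this.imp fun _ h => h.2
  · rintro ⟨i, hi⟩
    refine ⟨_, (congrFun (congrArg Engine.out (hafter d (i + 1))) n).trans ?_⟩
    exact ((Engine.execList_flatMap_clause g (i + 1)).2 n).2 ⟨i, i.lt_succ_self, hi⟩

/-- An operator on an operand `d` and an input `u` is open if each of its values `true` is already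
determined by finite parts of `d` and `u`. -/
def IsOpenOper (G : R → R → R) : Prop :=
  ∀ d u n, G d u n = true →
    ∃ N, ∀ d' u', (∀ k < N, d' k = d k) → (∀ k < N, u' k = u k) → G d' u' n = true

/-- The clause expressing that the operand and the input agree with `d` and `u` up to `N`. -/
def Clause.agree (d u : R) (N n : ℕ) : Clause :=
  ((List.range N).map (fun k => .operand k (d k)) ++ (List.range N).map fun k => .input k (u k), n)

theorem Clause.sat_agree {d u d' u' : R} {N n : ℕ} :
    (agree d u N n).Sat d' u' ↔ (∀ k < N, d' k = d k) ∧ ∀ k < N, u' k = u k := by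
  simp [agree, Clause.Sat, Literal.Sat, or_imp, forall_and]

-- The operator may depend on the real that defines it, as in the recursion theorem.
theorem IsOpenOper.exists_oper_eq {G : R → R → R} (hG : IsOpenOper G) (x : R) :
    ∃ u : R, (∀ n, u (8 * n) = x n) ∧ ∀ d, oper u d = G d u := by
  let S : Set Clause := {c | ∀ d u, c.Sat d u → G d u c.2 = true}
  have hS : S.Nonempty := ⟨([.operand 0 true, .operand 0 false], 0), fun d u h => by
    simp_all [Clause.Sat, Literal.Sat]⟩
  obtain ⟨g, hg⟩ := S.to_countable.exists_eq_range hS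
  obtain ⟨u, hux, hu⟩ := exists_oper_eq_of_clauses g x
  refine ⟨u, hux, fun d => funext fun n => ?_⟩
  rw [Bool.eq_iff_iff, hu]
  constructor
  · rintro ⟨i, rfl, hi⟩
    exact (hg ▸ Set.mem_range_self i : g i ∈ S) d u hi
  · intro hn
    obtain ⟨N, hN⟩ := hG d u n hn
    have hmem : Clause.agree d u N n ∈ S := fun d' u' h =>
      hN d' u' (Clause.sat_agree.1 h).1 (Clause.sat_agree.1 h).2
    obtain ⟨i, hi⟩ := hg ▸ hmem
    exact ⟨i, by rw [hi, Clause.agree], hi ▸ Clause.sat_agree.2 ⟨fun _ _ => rfl, fun _ _ => rfl⟩⟩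

/-! ### Reals whose iteration simulates a machine -/

theorem iter_add_mul_eq (y : R) {a c : Ordinal.{0}} (hc : 0 < c) (h : iter y (a + c) = iter y a)
    (hle : ∀ b < c, ∀ n, iter y (a + b) n = true → iter y a n = true) (e : Ordinal.{0}) :
    iter y (a + c * e) = iter y a := by
  induction e using ordinal_induction with
  | zero => rw [mul_zero, add_zero]
  | add_one e ih => rw [mul_add, mul_one, ← add_assoc, iter_add_congr y ih, h]
  | limit e he ih =>
    rw [iter_limit y (isSuccLimit_add _ (isSuccLimit_mul_right hc he))]
    funext n
    rw [lsup_add (mul_pos hc he.bot_lt), lsup_mul hc he]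
    · exact lsup_of_eventually he.bot_lt fun b _ hb => by rw [ih b hb]
    · intro b hb d hd h
      rw [← add_assoc, iter_add_congr y (ih b hb)] at h
      exact .inl (ih b hb ▸ hle d hd n h)

-- Between two matches the values are below the target by `Exceeded`, so that the loop between them
-- also passes through limits, where values could otherwise accumulate.
theorem exists_match_of_mem_accepted {w : R} (hw : w ∈ accepted) (b : Ordinal.{0}) :
    ∃ c, b ≤ c ∧ Match w c := by
  obtain ⟨_, ⟨d, rfl, ⟨a, had, ha⟩, hd⟩, he, -⟩ := hw
  obtain ⟨c, rfl⟩ := exists_add_of_le had.le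
  have hc : 0 < c := by simpa using had
  have hle (e) (hec : e < c) (n) (hn : iter (leftR w) (a + e) n = true) :
      iter (leftR w) a n = true := by
    rcases eq_zero_or_pos e with rfl | he0
    · rwa [add_zero] at hn
    · by_contra h
      rw [ha, Bool.not_eq_true] at h
      refine he (a + e + 1) (by gcongr) ⟨_, rfl, ⟨a, ?_, ha⟩, n, hn, h⟩
      exact lt_add_of_pos_right a he0
  have hloop := iter_add_mul_eq (leftR w) hc (hd.trans ha.symm) hle b
  exact ⟨a + c * b, (Ordinal.le_mul_right b hc).trans le_add_self, hloop.trans ha⟩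

/-- The bits that describe a snapshot of a machine. Limit stages are detected by two flags:
they are set alternately at successor stages, hence both at limit stages. -/
inductive Bit (Q : ℕ) where
  | tape (i : Fin 3) (n : ℕ)
  | head (n : ℕ)
  | state (q : Fin (Q + 1))
  | flag (b : Bool)
  deriving Countable

theorem Bit.exists_equiv (Q : ℕ) : ∃ e : Bit Q ≃ ℕ, e (.tape 2 0) = 0 := by
  have : Infinite (Bit Q) := .of_injective Bit.head fun _ _ => Bit.head.inj
  obtain ⟨e⟩ := nonempty_equiv_of_countable (α := Bit Q) (β := ℕ)
  exact ⟨e.trans (Equiv.swap (e (.tape 2 0)) 0), by simp⟩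

/-- The bits of a snapshot with given flags. -/
def Snapshot.bits {Q : ℕ} (s : Snapshot Q) (f : Bool → Bool) : Bit Q → Bool
  | .tape i n => s.tape i n
  | .head n => decide (n = s.head)
  | .state q => decide (q = s.state)
  | .flag b => f b

section Flags
variable {Q : ℕ} {D : Bit Q → Bool}

/-- Some flag is set, as it is at every stage after the first. -/
def Started (D : Bit Q → Bool) : Prop := ∃ b, D (.flag b) = true

/-- Both flags are set, as they are exactly at the limit stages. -/
def AtLimit (D : Bit Q → Bool) : Prop := ∀ b, D (.flag b) = true

/-- The flags at the next stage. -/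
noncomputable def nextFlag (D : Bit Q → Bool) (b : Bool) : Bool :=
  if AtLimit D then !b else D (.flag !b)

theorem not_forall_nextFlag (D : Bit Q → Bool) : ¬ ∀ b, nextFlag D b = true := by
  intro h
  by_cases hl : AtLimit D
  · simpa [nextFlag, hl] using h true
  · exact hl fun b => by simpa [nextFlag, hl] using h !b

theorem Started.exists_nextFlag (h : Started D) : ∃ b, nextFlag D b = true := by
  by_cases hl : AtLimit D
  · exact ⟨false, by simp [nextFlag, hl]⟩
  · obtain ⟨b, hb⟩ := h
    exact ⟨!b, by simp [nextFlag, hl, hb]⟩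

end Flags

namespace Machine
variable (M : Machine)

/-- The bits describe a snapshot with state `q` and head position `h`; at limit stages these are
prescribed, whatever upper limits the bits have accumulated. -/
def Reads (D : Bit M.Q → Bool) (q : Fin (M.Q + 1)) (h : ℕ) : Prop :=
  if AtLimit D then q = M.limit ∧ h = 0 else D (.state q) = true ∧ D (.head h) = true

/-- The operation on bits that simulates a step of the machine, but does nothing once the machine
has halted. From bits without flags it produces the initial snapshot on input `u`. -/
noncomputable def simStep (D : Bit M.Q → Bool) (u : R) (i : Bit M.Q) : Bool :=
  if Started D then
    decide (∃ q h, M.Reads D q h ∧ (if q = M.halt then D i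
      else (M.stepSnap ⟨q, h, fun j n => D (.tape j n)⟩).bits (nextFlag D) i) = true)
  else (M.init u).bits (fun b => !b) i

variable {M}

theorem exists_finset_simStep_of_started {D : Bit M.Q → Bool} {u : R} {i : Bit M.Q}
    (hs : Started D) (h : M.simStep D u i = true) : ∃ S : Finset (Bit M.Q),
      ∀ D' u', (∀ j ∈ S, D' j = D j) → M.simStep D' u' i = true := by
  simp only [simStep, hs, if_true, decide_eq_true_eq] at h
  obtain ⟨q, h, hr, ho⟩ := h
  refine ⟨{.flag true, .flag false, .state q, .head h, .tape 0 h, .tape 1 h, .tape 2 h, i},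
    fun D' u' hD => ?_⟩
  simp only [Finset.mem_insert, Finset.mem_singleton, forall_eq_or_imp, forall_eq] at hD
  obtain ⟨hflag₁, hflag₀, hstate, hhead, htape₀, htape₁, htape₂, hi⟩ := hD
  have hflag : ∀ b, D' (.flag b) = D (.flag b) := by rintro (_ | _) <;> assumption
  have hlim : AtLimit D' ↔ AtLimit D := by simp only [AtLimit, hflag]
  have hnext : nextFlag D' = nextFlag D := funext fun b => by simp only [nextFlag, hlim, hflag]
  have htape : (fun j => D' (.tape j h)) = fun j => D (.tape j h) := by
    funext j
    fin_cases j <;> assumption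
  have hs' : Started D' := by simpa only [Started, hflag] using hs
  rw [simStep, if_pos hs', decide_eq_true_iff]
  refine ⟨q, h, by simpa only [Reads, hlim, hstate, hhead] using hr, ?_⟩
  rw [← ho, hnext, hi]
  split_ifs
  · rfl
  · cases i <;> simp [Snapshot.bits, stepSnap, htape, hi]

theorem exists_bound_simStep_of_not_started {D : Bit M.Q → Bool} {u : R} {i : Bit M.Q}
    (hs : ¬ Started D) (h : M.simStep D u i = true) : ∃ N, ∀ D' u',
      (∀ b, D' (.flag b) = D (.flag b)) → (∀ k < N, u' k = u k) → M.simStep D' u' i = true := by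
  refine ⟨match i with | .tape _ n => n + 1 | _ => 0, fun D' u' hD hu => ?_⟩
  have hs' : ¬ Started D' := by simpa only [Started, hD] using hs
  rw [← h, simStep, simStep, if_neg hs, if_neg hs']
  cases i with
  | tape j n => simp only [Snapshot.bits, init, hu n n.lt_succ_self]
  | _ => rfl

theorem isOpenOper_simStep (e : Bit M.Q ≃ ℕ) :
    IsOpenOper fun d u n => M.simStep (fun i => d (e i)) u (e.symm n) := by
  intro d u n h
  by_cases hs : Started fun i => d (e i)
  · obtain ⟨S, hS⟩ := exists_finset_simStep_of_started hs h
    refine ⟨S.sup e + 1, fun d' u' hd _ => hS _ _ fun j hj => hd _ ?_⟩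
    exact Nat.lt_succ_of_le (Finset.le_sup (f := e) hj)
  · obtain ⟨N, hN⟩ := exists_bound_simStep_of_not_started hs h
    let F : ℕ := Finset.univ.sup fun b => e (.flag b)
    refine ⟨max N (F + 1), fun d' u' hd hu => hN _ _ (fun b => hd _ ?_) fun k hk =>
      hu k (hk.trans_le (le_max_left _ _))⟩
    have hb : e (.flag b) ≤ F := Finset.le_sup (f := fun b => e (.flag b)) (Finset.mem_univ b)
    exact (Nat.lt_succ_of_le hb).trans_le (le_max_right _ _)

/-- The bits describe a snapshot, in the sense relevant for `Machine.simStep`. -/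
structure Describes (D : Bit M.Q → Bool) (s : Snapshot M.Q) : Prop where
  started : Started D
  tape : ∀ i n, D (.tape i n) = s.tape i n
  reads : ∀ q h, M.Reads D q h ↔ q = s.state ∧ h = s.head

theorem describes_bits (s : Snapshot M.Q) {f : Bool → Bool} (hex : ∃ b, f b = true)
    (hall : ¬ ∀ b, f b = true) : Describes (M := M) (s.bits f) s where
  started := hex
  tape _ _ := rfl
  reads q h := by
    have : ¬ AtLimit (s.bits f) := hall
    simp only [Reads, if_neg this, Snapshot.bits, decide_eq_true_iff]

namespace Describes
variable {D : Bit M.Q → Bool} {s : Snapshot M.Q}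

theorem simStep_of_halt (h : Describes D s) (hs : s.state = M.halt) (u : R) :
    M.simStep D u = D := by
  funext i
  simp [simStep, h.started, h.reads, and_assoc, hs]

theorem simStep_of_ne_halt (h : Describes D s) (hs : s.state ≠ M.halt) (u : R) :
    M.simStep D u = (M.stepSnap s).bits (nextFlag D) := by
  funext i
  simp [simStep, h.started, h.reads, and_assoc, hs, h.tape]

theorem simStep (h : Describes D s) (hs : s.state ≠ M.halt) (u : R) :
    Describes (M.simStep D u) (M.stepSnap s) := by
  rw [h.simStep_of_ne_halt hs]
  exact describes_bits _ h.started.exists_nextFlag (not_forall_nextFlag _)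

end Describes

section Simulation
variable {e : Bit M.Q ≃ ℕ} {y : R}

/-- The bits at stage `1 + b` of the simulation, which correspond to stage `b` of the machine. -/
noncomputable def simBits (e : Bit M.Q ≃ ℕ) (y : R) (b : Ordinal.{0}) (i : Bit M.Q) : Bool :=
  iter y (1 + b) (e i)

theorem simBits_limit {b : Ordinal.{0}} (hb : IsSuccLimit b) (i : Bit M.Q) :
    simBits e y b i = lsup (fun c => simBits e y c i) b := by
  rw [simBits, iter_limit y (isSuccLimit_add _ hb)]
  exact lsup_add hb.bot_lt

variable (hy : ∀ d, oper y d = fun n => M.simStep (fun i => d (e i)) y (e.symm n))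
include hy

theorem simBits_zero : simBits e y 0 = (M.init y).bits fun b => !b := by
  funext i
  rw [simBits, add_zero, ← zero_add 1, iter_add_one, hy, iter_zero]
  simp [simStep, zeroR, Started]

theorem simBits_add_one (b : Ordinal.{0}) :
    simBits e y (b + 1) = M.simStep (simBits e y b) y := by
  funext i
  rw [simBits, ← add_assoc, iter_add_one, hy]
  exact congrArg _ (e.symm_apply_apply i)

theorem atLimit_simBits {b : Ordinal.{0}} (hb : IsSuccLimit b)
    (hd : ∀ c < b, Describes (simBits e y c) (M.snap y c))
    (hne : ∀ c < b, ¬ M.haltedAt y c) : AtLimit (simBits e y b) := by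
  intro f
  rw [simBits_limit hb]
  refine lsup_eq_true.2 fun c hc => ?_
  have hc₁ := hb.add_one_lt hc
  have hc₂ := hb.add_one_lt hc₁
  have hstep (d) (hdb : d < b) : simBits e y (d + 1) =
      (M.stepSnap (M.snap y d)).bits (nextFlag (simBits e y d)) := by
    rw [simBits_add_one hy, (hd d hdb).simStep_of_ne_halt (hne d hdb)]
  have hlim : ¬ AtLimit (simBits e y (c + 1)) := by
    rw [hstep c hc]
    exact not_forall_nextFlag _
  obtain ⟨g, hg⟩ := (hd _ hc₁).started
  by_cases hfg : f = g
  · exact ⟨c + 1, (lt_add_one c).le, hc₁, hfg ▸ hg⟩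
  · refine ⟨c + 1 + 1, ((lt_add_one c).trans (lt_add_one _)).le, hc₂, ?_⟩
    obtain rfl : f = !g := Bool.eq_not.2 hfg
    rw [hstep _ hc₁, Snapshot.bits, nextFlag, if_neg hlim, Bool.not_not, hg]

theorem describes_simBits {a : Ordinal.{0}} (ha : ∀ b < a, ¬ M.haltedAt y b) :
    ∀ b ≤ a, Describes (simBits e y b) (M.snap y b) := by
  intro b
  induction b using ordinal_induction with
  | zero =>
    rw [simBits_zero hy, snap_zero]
    exact fun _ => describes_bits _ ⟨false, rfl⟩ fun h => absurd (h true) Bool.false_ne_true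
  | add_one b ih =>
    intro hb
    have hba := Order.add_one_le_iff.1 hb
    rw [simBits_add_one hy, snap_add_one]
    exact (ih hba.le).simStep (ha b hba) y
  | limit b hb ih =>
    intro hba
    have hd (c) (hc : c < b) := ih c hc (hc.le.trans hba)
    have hlim := atLimit_simBits hy hb hd fun c hc => ha c (hc.trans_le hba)
    rw [M.snap_limit y hb]
    refine ⟨⟨true, hlim true⟩, fun i n => ?_, fun q h => by rw [Reads, if_pos hlim]⟩
    rw [simBits_limit hb]
    exact lsup_congr fun c hc => (hd c hc).tape i n

theorem simBits_of_halted {a : Ordinal.{0}} (hd : Describes (simBits e y a) (M.snap y a))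
    (ha : M.haltedAt y a) (c : Ordinal.{0}) : simBits e y (a + c) = simBits e y a := by
  induction c using ordinal_induction with
  | zero => rw [add_zero]
  | add_one c ih => rw [← add_assoc, simBits_add_one hy, ih, hd.simStep_of_halt ha]
  | limit c hc ih =>
    funext i
    rw [simBits_limit (isSuccLimit_add _ hc), lsup_add hc.bot_lt]
    exact lsup_of_eventually hc.bot_lt fun b _ hb => by rw [ih b hb]

theorem iter_eq_of_outputs (he : e (.tape 2 0) = 0) {z : R} (hz : M.outputs y z) :
    ∃ a, ∀ b, a ≤ b → iter y b 0 = z 0 := by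
  obtain ⟨a, ⟨ha, hne⟩, rfl⟩ := hz
  have hd := describes_simBits hy hne a le_rfl
  refine ⟨1 + a, fun b hb => ?_⟩
  obtain ⟨c, rfl⟩ := exists_add_of_le hb
  rw [← hd.tape 2 0, ← simBits_of_halted hy hd ha c, simBits, add_assoc, he]

end Simulation

theorem exists_iter_eq_of_outputs (M : Machine) :
    ∃ y : R, ∀ z, M.outputs y z → ∃ a, ∀ b, a ≤ b → iter y b 0 = z 0 := by
  obtain ⟨e, he⟩ := Bit.exists_equiv M.Q
  obtain ⟨y, -, hy⟩ := (isOpenOper_simStep e).exists_oper_eq zeroR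
  exact ⟨y, fun z hz => iter_eq_of_outputs hy he hz⟩

theorem exists_not_outputs_of_accepted (M : Machine) :
    ∃ y : R, ∀ w ∈ accepted, leftR w = y → ¬ M.outputs y (rightR w) := by
  obtain ⟨y, hy⟩ := M.exists_iter_eq_of_outputs
  refine ⟨y, ?_⟩
  rintro w hw rfl hz
  obtain ⟨a, ha⟩ := hy _ hz
  obtain ⟨c, hac, hc⟩ := exists_match_of_mem_accepted hw a
  have h := (congrFun hc 0).symm.trans (ha c hac)
  simp [target] at h

end Machine

/-! ### Countable clocks and nonempty slices -/

section Recurrence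

theorem isSuccLimit_iSup_of_strictMono {h : ℕ → Ordinal.{0}} (hh : StrictMono h) :
    IsSuccLimit (⨆ k, h k) := by
  refine IsLUB.isSuccLimit_of_notMem (isLUB_ciSup Ordinal.bddAbove_of_small)
    (Set.range_nonempty h) ?_
  rintro ⟨k, hk⟩
  exact (hk ▸ hh k.lt_succ_self).not_ge (Ordinal.le_iSup h (k + 1))

theorem countable_Iic_of_lt_omega_one {ρ : Ordinal.{0}} (hρ : ρ < ω_ 1) :
    (Set.Iic ρ).Countable := by
  rw [← Set.Iio_insert]
  refine Set.Countable.insert _ ?_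
  rwa [← Cardinal.le_aleph0_iff_set_countable, Cardinal.mk_Iio_ordinal, Cardinal.lift_le_aleph0,
    ← Order.lt_succ_iff, Cardinal.succ_aleph0, ← Cardinal.lt_ord, Cardinal.ord_aleph]

variable (y : R)

theorem exists_forall_iter_le_omega_one : ∃ b < (ω_ 1 : Ordinal.{0}), ∀ c, b ≤ c → c < ω_ 1 →
    ∀ n, iter y c n = true → iter y (ω_ 1) n = true := by
  have hlim := Cardinal.isSuccLimit_omega 1
  have hbit (n) : ∃ b < (ω_ 1 : Ordinal.{0}), ∀ c, b ≤ c → c < ω_ 1 →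
      iter y c n = true → iter y (ω_ 1) n = true := by
    cases hn : iter y (ω_ 1) n with
    | true => exact ⟨0, hlim.bot_lt, fun _ _ _ _ => rfl⟩
    | false =>
      rw [iter_limit y hlim] at hn
      obtain ⟨b, hb, h⟩ := lsup_eq_false.1 hn
      exact ⟨b, hb, fun c hbc hc hcn => (h c hbc hc).symm.trans hcn⟩
  choose β hβ h using hbit
  exact ⟨⨆ n, β n, Ordinal.iSup_lt_omega_one hβ, fun c hc hc' n =>
    h n c ((Ordinal.le_iSup β n).trans hc) hc'⟩

theorem exists_forall_iter_omega_one_le {a : Ordinal.{0}} (ha : a < ω_ 1) :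
    ∃ b < (ω_ 1 : Ordinal.{0}), a < b ∧
      ∀ n, iter y (ω_ 1) n = true → ∃ c, a ≤ c ∧ c < b ∧ iter y c n = true := by
  have hlim := Cardinal.isSuccLimit_omega 1
  have hbit (n) : ∃ c, a ≤ c ∧ c < ω_ 1 ∧ (iter y (ω_ 1) n = true → iter y c n = true) := by
    cases hn : iter y (ω_ 1) n with
    | false => exact ⟨a, le_rfl, ha, fun h => absurd h Bool.false_ne_true⟩
    | true =>
      rw [iter_limit y hlim] at hn
      obtain ⟨c, hac, hc, hcn⟩ := lsup_eq_true.1 hn a ha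
      exact ⟨c, hac, hc, fun _ => hcn⟩
  choose c hac hc hcn using hbit
  have hlt (n) : c n < (⨆ n, c n) + 1 := lt_add_one_iff.2 (Ordinal.le_iSup c n)
  exact ⟨(⨆ n, c n) + 1, hlim.add_one_lt (Ordinal.iSup_lt_omega_one hc), (hac 0).trans_lt (hlt 0),
    fun n hn => ⟨c n, hac n, hlt n, hcn n hn⟩⟩

theorem exists_iter_eq_omega_one {a : Ordinal.{0}} (ha : a < ω_ 1) :
    ∃ b, a < b ∧ b < ω_ 1 ∧ iter y b = iter y (ω_ 1) := by
  obtain ⟨β, hβ, hle⟩ := exists_forall_iter_le_omega_one y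
  have hstep (b : Set.Iio (ω_ 1 : Ordinal.{0})) := exists_forall_iter_omega_one_le y b.2
  choose g hg hlt hge using hstep
  let h (k : ℕ) : Set.Iio (ω_ 1 : Ordinal.{0}) := (fun b => ⟨g b, hg b⟩)^[k] ⟨max a β, max_lt ha hβ⟩
  have hsucc (k) : (h (k + 1)).1 = g (h k) := by simp only [h, Function.iterate_succ_apply']
  have hmono : StrictMono fun k => (h k).1 := strictMono_nat_of_lt_succ fun k => hsucc k ▸ hlt (h k)
  have hb : ⨆ k, (h k).1 < ω_ 1 := Ordinal.iSup_lt_omega_one fun k => (h k).2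
  have hlt_sup (k) : (h k).1 < ⨆ k, (h k).1 := Ordinal.lt_iSup_iff.2 ⟨_, hmono k.lt_succ_self⟩
  refine ⟨⨆ k, (h k).1, (le_max_left a β).trans_lt (hlt_sup 0), hb, ?_⟩
  rw [iter_limit y (isSuccLimit_iSup_of_strictMono hmono)]
  funext n
  cases hn : iter y (ω_ 1) n with
  | false =>
    refine lsup_of_eventually (hlt_sup 0) fun c hc hc' => Bool.eq_false_iff.2 fun hcn => ?_
    have := hle c ((le_max_right a β).trans hc) (hc'.trans hb) n hcn
    exact Bool.false_ne_true (hn.symm.trans this)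
  | true =>
    refine lsup_eq_true.2 fun c hc => ?_
    obtain ⟨k, hk⟩ := Ordinal.lt_iSup_iff.1 hc
    obtain ⟨d, hkd, hd, hdn⟩ := hge (h k) n hn
    exact ⟨d, hk.le.trans hkd, (hsucc k ▸ hd).trans (hlt_sup (k + 1)), hdn⟩

theorem iter_le_omega_one_of_iter_eq {b c : Ordinal.{0}} (hb : iter y b = iter y (ω_ 1))
    (hbc : b ≤ c) (hc : c < ω_ 1) {n : ℕ} (hn : iter y c n = true) : iter y (ω_ 1) n = true := by
  obtain ⟨β, hβ, hle⟩ := exists_forall_iter_le_omega_one y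
  obtain ⟨δ, hβδ, hδ, h⟩ := exists_iter_eq_omega_one y hβ
  obtain ⟨k, rfl⟩ := exists_add_of_le hbc
  have hk : δ + k < ω_ 1 := isPrincipal_add_omega 1 hδ (le_add_self.trans_lt hc)
  refine hle (δ + k) (hβδ.le.trans le_self_add) hk n ?_
  rwa [iter_add_congr y (h.trans hb.symm)]

end Recurrence

section Clock
variable {f : ℕ → Ordinal.{0}} {ρ : Ordinal.{0}} {m₀ : ℕ}

/-- The operator whose iteration, from stage 1 on, is at stage `1 + e` the set of those `n` with
`e ≤ f n`. The bit `m₀` tells whether stage 1 has been reached. -/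
noncomputable def clockOper (f : ℕ → Ordinal.{0}) (m₀ : ℕ) (d : R) : R :=
  fun n => decide (d m₀ = false ∨ ∃ m, d m = true ∧ f m < f n)

theorem isOpenOper_clockOper (f : ℕ → Ordinal.{0}) (m₀ : ℕ) :
    IsOpenOper fun d _ => clockOper f m₀ d := by
  intro d u n h
  simp only [clockOper, decide_eq_true_eq] at h ⊢
  rcases h with h | ⟨m, hm, hlt⟩
  · exact ⟨m₀ + 1, fun d' _ hd _ => .inl (by rw [hd m₀ m₀.lt_succ_self, h])⟩
  · exact ⟨m + 1, fun d' _ hd _ => .inr ⟨m, by rw [hd m m.lt_succ_self, hm], hlt⟩⟩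

variable {w : R} (hf : Set.Iic ρ = Set.range f) (hm₀ : f m₀ = ρ)
  (hw : ∀ d, oper (rightR w) d = clockOper f m₀ d)
include hf hm₀ hw

theorem iter_clock {e : Ordinal.{0}} (he : e ≤ ρ + 1) (n : ℕ) :
    iter (rightR w) (1 + e) n = true ↔ e ≤ f n := by
  induction e using ordinal_induction generalizing n with
  | zero =>
    rw [add_zero, ← zero_add (1 : Ordinal.{0}), iter_add_one, hw, iter_zero]
    simp [clockOper, zeroR]
  | add_one e ih =>
    have heρ : e ≤ ρ := by simpa using he
    obtain ⟨m, rfl⟩ : e ∈ Set.range f := hf ▸ heρ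
    have ih := ih (le_self_add.trans he)
    have hm₀' : iter (rightR w) (1 + f m) m₀ = true := (ih m₀).2 (hm₀ ▸ heρ)
    rw [← add_assoc, iter_add_one, hw, clockOper, decide_eq_true_eq, hm₀', add_one_le_iff]
    simp only [ih, Bool.true_eq_false, false_or]
    exact ⟨fun ⟨k, hk, hkn⟩ => hk.trans_lt hkn, fun h => ⟨m, le_rfl, h⟩⟩
  | limit e hlim ih =>
    have ih (b) (hb : b < e) := ih b hb (hb.le.trans he) n
    simp only [iter_limit _ (isSuccLimit_add 1 hlim)]
    rw [lsup_add hlim.bot_lt, lsup_eq_true]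
    constructor
    · intro h
      refine hlim.le_iff_forall_le.2 fun b hb => ?_
      obtain ⟨c, hbc, hc, hcn⟩ := h b hb
      exact hbc.trans ((ih c hc).1 hcn)
    · exact fun h b hb => ⟨b, le_rfl, hb, (ih b hb).2 (hb.le.trans h)⟩

theorem tick_clock {e : Ordinal.{0}} (he : e ≤ ρ) : Tick w (1 + e + 1) := by
  obtain ⟨n, rfl⟩ : e ∈ Set.range f := hf ▸ he
  have hclock {b} (hb : b ≤ f n + 1) := iter_clock hf hm₀ hw (hb.trans (by gcongr)) n
  refine ⟨n, ⟨?_, ?_⟩, ?_⟩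
  · rw [Ordinal.pred_add_one]
    exact (hclock le_self_add).2 le_rfl
  · rw [add_assoc, Bool.eq_false_iff, Ne, hclock le_rfl, add_one_le_iff]
    exact lt_irrefl _
  · rintro ⟨b, hb, hpred, hdrop⟩
    rcases eq_zero_or_pos b with rfl | hb0
    · rw [Ordinal.pred_zero] at hpred
      exact Bool.false_ne_true (hdrop.symm.trans hpred)
    · obtain ⟨b, rfl⟩ := exists_add_of_le (Order.one_le_iff_pos.2 hb0)
      have hbn : b ≤ f n := by
        rwa [lt_add_one_iff, add_le_add_iff_left] at hb
      exact Bool.false_ne_true (hdrop.symm.trans ((hclock (hbn.trans le_self_add)).2 hbn))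

theorem not_idle_clock {a : Ordinal.{0}} (ha : a ≤ ρ) : ¬ Idle w a := by
  rintro ⟨c, rfl, -, -, h⟩
  obtain ⟨e, he⟩ := exists_add_of_le (le_add_self : 1 ≤ c + 1)
  have heρ : e ≤ ρ := calc
    e ≤ 1 + e := le_add_self
    _ = c + 1 := he.symm
    _ ≤ c + 3 := by gcongr; norm_num
    _ ≤ ρ := ha
  have htick := tick_clock hf hm₀ hw heρ
  rw [← he, add_assoc, one_add_one_eq_two] at htick
  exact h htick

end Clock

theorem leftR_pairR (y z : R) : leftR (pairR y z) = y := by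
  funext n
  simp [leftR, pairR]

theorem rightR_pairR (y z : R) : rightR (pairR y z) = z := by
  funext n
  simp [rightR, pairR, Nat.mul_add_div]

theorem pairR_leftR_rightR (w : R) : pairR (leftR w) (rightR w) = w := by
  funext n
  simp only [pairR, leftR, rightR]
  split_ifs with h <;> congr 1 <;> omega

theorem exists_clock {ρ : Ordinal.{0}} (hρ : ρ < ω_ 1) (v : R) :
    ∃ z : R, (∀ n, z (8 * n) = v n) ∧ ∀ w, rightR w = z → ∀ a ≤ ρ, ¬ Idle w a := by
  obtain ⟨f, hf⟩ := (countable_Iic_of_lt_omega_one hρ).exists_eq_range Set.nonempty_Iic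
  obtain ⟨m₀, hm₀⟩ : ρ ∈ Set.range f := hf ▸ Set.mem_Iic.2 le_rfl
  obtain ⟨z, hzv, hz⟩ := (isOpenOper_clockOper f m₀).exists_oper_eq v
  exact ⟨z, hzv, fun w hw a => not_idle_clock hf hm₀ (by rw [hw]; exact hz)⟩

theorem exists_pairR_mem_accepted (y : R) : ∃ z, pairR y z ∈ accepted := by
  obtain ⟨δ, -, hδ, hδv⟩ := exists_iter_eq_omega_one y (Cardinal.isSuccLimit_omega 1).bot_lt
  obtain ⟨ρ, hδρ, hρ, hρv⟩ := exists_iter_eq_omega_one y hδ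
  obtain ⟨z, hzv, hidle⟩ := exists_clock hρ fun n => iter y (ω_ 1) n ^^ decide (n = 0)
  have htarget : target (pairR y z) = iter y (ω_ 1) := by
    funext n
    rw [target, rightR_pairR, hzv, Bool.xor_assoc, Bool.xor_self, Bool.xor_false]
  have hmatch {b} : Match (pairR y z) b ↔ iter y b = iter y (ω_ 1) := by
    rw [Match, leftR_pairR, htarget]
  refine ⟨z, ρ + 1, ⟨ρ, rfl, ⟨δ, hδρ, hmatch.2 hδv⟩, hmatch.2 hρv⟩, ?_, fun b hb =>
    hidle _ (rightR_pairR y z) b (lt_add_one_iff.1 hb)⟩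
  rintro _ ha ⟨c, rfl, ⟨b, hbc, hb⟩, n, hcn, hn⟩
  rw [leftR_pairR] at hcn
  have hc : c ≤ ρ := by simpa using ha
  have := iter_le_omega_one_of_iter_eq y (hmatch.1 hb) hbc.le (hc.trans_lt hρ) hcn
  exact Bool.false_ne_true ((htarget ▸ hn).symm.trans this)

theorem pairCodes_setOf_pairR_mem (A : Set R) : pairCodes {p | pairR p.1 p.2 ∈ A} = A := by
  ext w
  simp only [pairCodes, Set.mem_ofPred_eq, pairR_leftR_rightR]

end ITTM

/-- **No Uniformization Theorem.** There is an infinite time decidable subset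
of the plane, all of whose slices are nonempty, which does not contain the
graph of any infinite time computable total function. -/
theorem no_uniformization :
    ∃ A : Set (ITTM.R × ITTM.R),
      ITTM.ITTMDecidable (pairCodes A) ∧
      (∀ y : ITTM.R, ∃ z : ITTM.R, (y, z) ∈ A) ∧
      ¬ ∃ M : ITTM.Machine, ∀ y : ITTM.R, ∃ z : ITTM.R, M.outputs y z ∧ (y, z) ∈ A := by
  refine ⟨{p | ITTM.pairR p.1 p.2 ∈ ITTM.accepted}, ?_, ITTM.exists_pairR_mem_accepted, ?_⟩
  · rw [ITTM.pairCodes_setOf_pairR_mem]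
    exact ITTM.decidable_accepted
  · rintro ⟨M, hM⟩
    obtain ⟨y, hy⟩ := M.exists_not_outputs_of_accepted
    obtain ⟨z, hz, hyz⟩ := hM y
    refine hy _ hyz (ITTM.leftR_pairR y z) ?_
    rwa [ITTM.rightR_pairR]
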